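/- arXiv:2209.12044 — 4 statements merged into one kernel-verified Lean document; each statement's English description precedes it below -/
import Mathlib

section
/- Let W ⊆ C^ω be an objective which has ε-memory ≤ μ for a cardinal μ. Then for every cardinal κ there exists an ε-separated well-monotone C^ε-graph of breadth ≤ μ which is (κ, W^ε)-universal. -/
universe u v

open Cardinal

/-- A `C`-pregraph on vertex type `V`: a set of coloured directed edges. -/
structure Pregraph (C : Type u) (V : Type u) : Type u where
  Edge : V → C → V → Prop

namespace Pregraph

variable {C V V' : Type u}

/-- A pregraph is a graph when it has no sinks. -/
def NoSinks (G : Pregraph C V) : Prop :=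
  ∀ v : V, ∃ c v', G.Edge v c v'

/-- An infinite path with vertex sequence `π` and colour sequence `γ`. -/
def InfPath (G : Pregraph C V) (π : ℕ → V) (γ : ℕ → C) : Prop :=
  ∀ i, G.Edge (π i) (γ i) (π (i + 1))

/-- A finite path starting at a given vertex, recorded as a list of (colour, target) pairs. -/
def ListPath (G : Pregraph C V) : V → List (C × V) → Prop
  | _, [] => True
  | v, e :: p => G.Edge v e.1 e.2 ∧ G.ListPath e.2 p

/-- Endpoint of a finite path. -/
def pathEnd : V → List (C × V) → V
  | v, [] => v
  | _, e :: p => pathEnd e.2 p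

/-- A pretree: every vertex is reached from the root by a unique finite path. -/
def IsPretree (G : Pregraph C V) (t₀ : V) : Prop :=
  ∀ t : V, ∃! p : List (C × V), G.ListPath t₀ p ∧ pathEnd t₀ p = t

/-- A tree: a pretree without sinks. -/
def IsTree (G : Pregraph C V) (t₀ : V) : Prop :=
  G.NoSinks ∧ G.IsPretree t₀

/-- Morphisms of pregraphs. -/
def IsMorphism (G : Pregraph C V) (H : Pregraph C V') (φ : V → V') : Prop :=
  ∀ ⦃v c v'⦄, G.Edge v c v' → H.Edge (φ v) c (φ v')

/-- The value of a vertex with respect to a valuation: the supremum of the values of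
infinite paths from the vertex. -/
noncomputable def valueAt {X : Type v} [CompleteLinearOrder X]
    (G : Pregraph C V) (val : (ℕ → C) → X) (v : V) : X :=
  sSup {x | ∃ π γ, π 0 = v ∧ G.InfPath π γ ∧ val γ = x}

/-- A vertex satisfies an objective `W` if every infinite path from it has colour
sequence in `W`. -/
def VertexSat (G : Pregraph C V) (W : Set (ℕ → C)) (v : V) : Prop :=
  ∀ π γ, π 0 = v → G.InfPath π γ → γ ∈ W

/-- A pregraph satisfies an objective if all its vertices do. -/
def Sat (G : Pregraph C V) (W : Set (ℕ → C)) : Prop :=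
  ∀ v, G.VertexSat W v

/-- Monotonicity of a pregraph with respect to an order relation `le`:
`u ≥ v →c v' ≥ u'` implies `u →c u'`. -/
def MonotoneRel (G : Pregraph C V) (le : V → V → Prop) : Prop :=
  ∀ ⦃u v c v' u'⦄, le v u → G.Edge v c v' → le u' v' → G.Edge u c u'

end Pregraph

/-- The strict relation associated to `le`. -/
def strictOf {V : Type u} (le : V → V → Prop) : V → V → Prop :=
  fun a b => le a b ∧ a ≠ b

/-- `w' : ℕ → C` is a completion of `w : ℕ → Option C` if the projection of `w`
(deleting all `none`'s, i.e. all ε's) is a prefix of (or equal to) `w'`. -/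
def IsCompletion {C : Type u} (w : ℕ → Option C) (w' : ℕ → C) : Prop :=
  ∀ (k n : ℕ) (h : n < ((List.range k).filterMap w).length),
    ((List.range k).filterMap w).get ⟨n, h⟩ = w' n

/-- The ε-extension of a valuation, where `none` plays the role of ε.
If the projection of `w` is infinite, its unique completion `w'` yields `val w'`;
otherwise this is the infimum of `val` over all completions. -/
noncomputable def epsExtension {C : Type u} {X : Type v} [CompleteLinearOrder X]
    (val : (ℕ → C) → X) : (ℕ → Option C) → X :=
  fun w => sInf {x | ∃ w', IsCompletion w w' ∧ val w' = x}

/-- The ε-extension of an objective. -/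
def epsObjective {C : Type u} (W : Set (ℕ → C)) : Set (ℕ → Option C) :=
  {w | ∃ w', IsCompletion w w' ∧ w' ∈ W}

/-- Strategies: `S` is a graph, `πS` a morphism sending `s₀` to `v₀`, and every Adam move
can be simulated from every state above the corresponding vertex. -/
def IsStrategy {C V VS : Type u} (G : Pregraph C V) (VEve : Set V) (v₀ : V)
    (S : Pregraph C VS) (πS : VS → V) (s₀ : VS) : Prop :=
  S.NoSinks ∧ S.IsMorphism G πS ∧ πS s₀ = v₀ ∧
    ∀ v, v ∉ VEve → ∀ c v', G.Edge v c v' →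
      ∀ s, πS s = v → ∃ s', πS s' = v' ∧ S.Edge s c s'

/-- The value of a game: the infimum of the values of its strategies. -/
noncomputable def gameValue {C V : Type u} {X : Type v} [CompleteLinearOrder X]
    (G : Pregraph C V) (VEve : Set V) (v₀ : V) (val : (ℕ → C) → X) : X :=
  sInf {x | ∃ (VS : Type u) (S : Pregraph C VS) (πS : VS → V) (s₀ : VS),
    IsStrategy G VEve v₀ S πS s₀ ∧ S.valueAt val s₀ = x}

/-- An ε-strategy: a product strategy over `M` (vertices form a subset `D ⊆ V × M`,
projection is the first component) whose ε-edges do not update the memory. -/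
def IsEpsStrategy {C V M : Type u} (G : Pregraph (Option C) V) (VEve : Set V) (v₀ : V)
    (D : Set (V × M)) (S : Pregraph (Option C) ↥D) (s₀ : ↥D) : Prop :=
  IsStrategy G VEve v₀ S (fun s => (s : V × M).1) s₀ ∧
    ∀ s s' : ↥D, S.Edge s none s' → (s : V × M).2 = (s' : V × M).2

/-- A product strategy is chromatic if memory updates only depend on the current memory
state and the colour read. -/
def IsChromaticStrat {C V M : Type u} (D : Set (V × M)) (S : Pregraph C ↥D) : Prop :=
  ∃ δ : M → C → M, ∀ (s s' : ↥D) (c : C), S.Edge s c s' → (s' : V × M).2 = δ (s : V × M).2 c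

/-- ε-separated monotone graph over `M` (with `part` the partition into fibres):
`v ≤ v' ↔ v' →ε v` is a partial order making the graph monotone, ε-edges stay inside
fibres, and each fibre is totally ordered. -/
structure IsEpsSeparated {C V M : Type u} (U : Pregraph (Option C) V) (part : V → M) : Prop where
  refl : ∀ v, U.Edge v none v
  antisymm : ∀ ⦃v v'⦄, U.Edge v none v' → U.Edge v' none v → v = v'
  mono : ∀ ⦃u v c v' u'⦄, U.Edge u none v → U.Edge v c v' → U.Edge v' none u' → U.Edge u c u'
  sameFiber : ∀ ⦃v v'⦄, U.Edge v none v' → part v = part v'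
  total : ∀ ⦃v v'⦄, part v = part v' → U.Edge v none v' ∨ U.Edge v' none v

/-- Well-foundedness of the order `v ≤ v' ↔ v' →ε v` of an ε-separated graph. -/
def EpsWellFounded {C V : Type u} (U : Pregraph (Option C) V) : Prop :=
  WellFounded (fun v v' => U.Edge v' none v ∧ v ≠ v')

/-- A chromatic ε-separated graph: colours act uniformly on the parts. -/
def IsChromaticGraph {C V M : Type u} (U : Pregraph (Option C) V) (part : V → M) : Prop :=
  ∃ δ : M → C → M, ∀ ⦃v c v'⦄, U.Edge v (some c) v' → part v' = δ (part v) c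

/-- `(κ, val)`-universality for a valuation: every tree of cardinality `< κ` maps into `U`
by a morphism preserving the value at the root. -/
def IsUniversal {C VU : Type u} {X : Type v} [CompleteLinearOrder X]
    (κ : Cardinal.{u}) (val : (ℕ → C) → X) (U : Pregraph C VU) : Prop :=
  ∀ (VT : Type u) (T : Pregraph C VT) (t₀ : VT), T.IsTree t₀ → #VT < κ →
    ∃ φ : VT → VU, T.IsMorphism U φ ∧ U.valueAt val (φ t₀) ≤ T.valueAt val t₀

/-- A valuation has ε-memory ≤ μ: in every ε-game, the value is attained by an ε-strategy
of memory ≤ μ. -/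
def HasEpsMemLE {C : Type u} {X : Type v} [CompleteLinearOrder X]
    (val : (ℕ → C) → X) (μ : Cardinal.{u}) : Prop :=
  ∀ (V : Type u) (G : Pregraph (Option C) V), G.NoSinks → ∀ (VEve : Set V) (v₀ : V),
    ∃ (M : Type u) (D : Set (V × M)) (S : Pregraph (Option C) ↥D) (s₀ : ↥D),
      #M ≤ μ ∧ IsEpsStrategy G VEve v₀ D S s₀ ∧
      S.valueAt (epsExtension val) s₀ ≤ gameValue G VEve v₀ (epsExtension val)

/-- The valuation (into `Prop`, ordered with `False = ⊥ < ⊤ = True`) associated with an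
objective `W`: value `⊥` exactly on the words of `W`. -/
def objValuation {C : Type u} (W : Set (ℕ → C)) : (ℕ → C) → Prop :=
  fun w => w ∉ W

namespace EpsAux

open Pregraph

variable {C V V' : Type u}

theorem value_iff (W : Set (ℕ → C)) (G : Pregraph (Option C) V) (v : V) :
    G.valueAt (epsExtension (objValuation W)) v ↔ ¬ G.VertexSat (epsObjective W) v := by
  have key : ∀ γ, epsExtension (objValuation W) γ ↔ γ ∉ epsObjective W := by
    intro γ
    unfold epsExtension objValuation epsObjective
    rw [sInf_Prop_eq]
    constructor
    · rintro h ⟨w', h1, h2⟩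
      exact h (w' ∉ W) ⟨w', h1, rfl⟩ h2
    · rintro h a ⟨w', h1, rfl⟩ h2
      exact h ⟨w', h1, h2⟩
  unfold valueAt
  rw [sSup_Prop_eq]
  constructor
  · rintro ⟨a, ⟨π, γ, h0, hp, rfl⟩, ha⟩ h
    exact (key γ).1 ha (h π γ h0 hp)
  · intro h
    unfold VertexSat at h
    push Not at h
    obtain ⟨π, γ, h0, hp, hγ⟩ := h
    exact ⟨_, ⟨π, γ, h0, hp, rfl⟩, (key γ).2 hγ⟩

theorem epsObj_of_prefixes (W : Set (ℕ → C)) (w₁ w₂ : ℕ → Option C)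
    (h : ∀ k, ∃ k', (List.range k).filterMap w₁ <+: (List.range k').filterMap w₂)
    (h₂ : w₂ ∈ epsObjective W) : w₁ ∈ epsObjective W := by
  obtain ⟨w', hc, hw⟩ := h₂
  refine ⟨w', ?_, hw⟩
  intro k n hn
  obtain ⟨k', hp⟩ := h k
  have hn' := lt_of_lt_of_le hn hp.length_le
  rw [← hc k' n hn']
  simp only [List.get_eq_getElem]
  exact hp.getElem hn

theorem listPath_append (G : Pregraph C V) (v : V) (p q : List (C × V)) :
    G.ListPath v (p ++ q) ↔ G.ListPath v p ∧ G.ListPath (pathEnd v p) q := by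
  induction p generalizing v with
  | nil => simp [ListPath, pathEnd]
  | cons e p ih => simp [ListPath, pathEnd, ih, and_assoc]

theorem pathEnd_append (v : V) (p q : List (C × V)) :
    pathEnd v (p ++ q) = pathEnd (pathEnd v p) q := by
  induction p generalizing v with
  | nil => simp [pathEnd]
  | cons e p ih => simp [pathEnd, ih]

/-- an unbounded chain of lists has a limit sequence -/
theorem chain_limit {α : Type u} (P : ℕ → List α) (hP : ∀ n, P n <+: P (n + 1))
    (hu : ∀ L, ∃ n, L < (P n).length) :
    ∃ x : ℕ → α, (∀ k, ∃ n, (List.range k).map x <+: P n) ∧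
      ∀ n, ∃ k, P n <+: (List.range k).map x := by
  have mono : ∀ m n, m ≤ n → P m <+: P n := by
    intro m n h
    induction h with
    | refl => exact List.prefix_rfl
    | step _ ih => exact ih.trans (hP _)
  choose N hN using hu
  let x : ℕ → α := fun i => (P (N i))[i]'(hN i)
  have hx : ∀ n i (h : i < (P n).length), x i = (P n)[i] := by
    intro n i h
    rcases le_total (N i) n with hh | hh
    · exact (mono _ _ hh).getElem (hN i)
    · exact ((mono _ _ hh).getElem h).symm
  have hpre : ∀ n k, k ≤ (P n).length → (List.range k).map x = (P n).take k := by
    intro n k h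
    apply List.ext_getElem
    · simp [h]
    · intro i h1 h2
      simp at h1
      simp [hx n i (by omega)]
  refine ⟨x, fun k => ⟨N k, ?_⟩, fun n => ⟨(P n).length, ?_⟩⟩
  · rw [hpre (N k) k (hN k).le]
    exact ⟨_, List.take_append_drop _ _⟩
  · rw [hpre n _ le_rfl]
    simp

theorem path_limit (G : Pregraph C V) (hG : G.NoSinks) (v : V) (P : ℕ → List (C × V))
    (hP : ∀ n, P n <+: P (n + 1)) (hl : ∀ n, G.ListPath v (P n)) :
    ∃ x : ℕ → C × V, (∀ k, G.ListPath v ((List.range k).map x)) ∧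
      ∀ n, ∃ k, P n <+: (List.range k).map x := by
  have main : ∀ P : ℕ → List (C × V), (∀ n, P n <+: P (n + 1)) → (∀ n, G.ListPath v (P n)) →
      (∀ L, ∃ n, L < (P n).length) →
      ∃ x : ℕ → C × V, (∀ k, G.ListPath v ((List.range k).map x)) ∧
        ∀ n, ∃ k, P n <+: (List.range k).map x := by
    intro P hP hl hu
    obtain ⟨x, h1, h2⟩ := chain_limit P hP hu
    refine ⟨x, fun k => ?_, h2⟩
    obtain ⟨n, q, hq⟩ := h1 k
    have := hl n
    rw [← hq, listPath_append] at this
    exact this.1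
  by_cases hu : ∀ L, ∃ n, L < (P n).length
  · exact main P hP hl hu
  · have mono : ∀ m n, m ≤ n → P m <+: P n := by
      intro m n h
      induction h with
      | refl => exact List.prefix_rfl
      | step _ ih => exact ih.trans (hP _)
    push Not at hu
    obtain ⟨L, hL⟩ := hu
    have hmax : ∃ N, ∀ n, (P n).length ≤ (P N).length := by
      by_contra hcon
      push Not at hcon
      have : ∀ k, ∃ n, k ≤ (P n).length := by
        intro k
        induction k with
        | zero => exact ⟨0, Nat.zero_le _⟩
        | succ k ih =>
          obtain ⟨n, hn⟩ := ih
          obtain ⟨m, hm⟩ := hcon n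
          exact ⟨m, by omega⟩
      obtain ⟨n, hn⟩ := this (L + 1)
      have := hL n
      omega
    obtain ⟨N, hN⟩ := hmax
    choose nc nv hnext using hG
    let Q : ℕ → List (C × V) := fun k => Nat.rec (P N)
      (fun _ q => q ++ [(nc (pathEnd v q), nv (pathEnd v q))]) k
    have hQs : ∀ k, Q (k + 1) = Q k ++ [(nc (pathEnd v (Q k)), nv (pathEnd v (Q k)))] :=
      fun k => rfl
    have hQl : ∀ k, G.ListPath v (Q k) := by
      intro k
      induction k with
      | zero => exact hl N
      | succ k ih =>
        rw [hQs, listPath_append]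
        exact ⟨ih, hnext _, trivial⟩
    have hQn : ∀ k, k ≤ (Q k).length := by
      intro k
      induction k with
      | zero => exact Nat.zero_le _
      | succ k ih => rw [hQs]; simp; exact ih
    obtain ⟨x, h1, h2⟩ := main Q (fun k => by rw [hQs]; exact List.prefix_append _ _) hQl
      (fun L => ⟨L + 1, hQn (L + 1)⟩)
    refine ⟨x, h1, fun n => ?_⟩
    obtain ⟨k, hk⟩ := h2 0
    refine ⟨k, List.IsPrefix.trans ?_ hk⟩
    change P n <+: P N
    rcases le_total n N with h | h
    · exact mono _ _ h
    · rw [(mono _ _ h).eq_of_length_le (hN n)]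

/-- `v` reaches `v'` by a finite path whose projection is that of `c`. -/
def Sim (G : Pregraph (Option C) V) (v : V) (c : Option C) (v' : V) : Prop :=
  ∃ p : List (Option C × V), G.ListPath v p ∧ pathEnd v p = v' ∧
    p.filterMap Prod.fst = c.toList

theorem Sim.nil (G : Pregraph (Option C) V) (v : V) : Sim G v none v :=
  ⟨[], trivial, rfl, rfl⟩

theorem Sim.single {G : Pregraph (Option C) V} {v : V} {c : Option C} {v' : V}
    (h : G.Edge v c v') : Sim G v c v' :=
  ⟨[(c, v')], ⟨h, trivial⟩, rfl, by cases c <;> rfl⟩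

theorem Sim.comp {G : Pregraph (Option C) V} {a b b' a' : V} {c : Option C}
    (h1 : Sim G a none b) (h2 : Sim G b c b') (h3 : Sim G b' none a') : Sim G a c a' := by
  obtain ⟨p, hp, rfl, hp'⟩ := h1
  obtain ⟨q, hq, rfl, hq'⟩ := h2
  obtain ⟨r, hr, rfl, hr'⟩ := h3
  refine ⟨p ++ (q ++ r), ?_, ?_, ?_⟩
  · rw [listPath_append, listPath_append]; exact ⟨hp, hq, hr⟩
  · rw [pathEnd_append, pathEnd_append]
  · simp only [List.filterMap_append]
    rw [hp', hq', hr']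
    simp

theorem sat_of_sim (W : Set (ℕ → C)) (G : Pregraph (Option C) V) (H : Pregraph (Option C) V')
    (hG : G.NoSinks) (R : V' → V → Prop)
    (hR : ∀ u v c u', R u v → H.Edge u c u' → ∃ v', R u' v' ∧ Sim G v c v')
    (u : V') (v : V) (huv : R u v) (hs : G.VertexSat (epsObjective W) v) :
    H.VertexSat (epsObjective W) u := by
  intro π γ h0 hp
  let Ok : ℕ → List (Option C × V) → Prop := fun n p =>
    G.ListPath v p ∧ R (π n) (pathEnd v p) ∧ p.filterMap Prod.fst = (List.range n).filterMap γ
  have step : ∀ n (p : {p // Ok n p}), ∃ q : {q // Ok (n + 1) q}, p.1 <+: q.1 := by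
    rintro n ⟨p, hp1, hp2, hp3⟩
    obtain ⟨v', hv', q, hq1, hq2, hq3⟩ := hR _ _ _ _ hp2 (hp n)
    refine ⟨⟨p ++ q, ?_, ?_, ?_⟩, List.prefix_append _ _⟩
    · rw [listPath_append]; exact ⟨hp1, hq1⟩
    · rw [pathEnd_append, hq2]; exact hv'
    · rw [List.filterMap_append, hp3, hq3, List.range_succ, List.filterMap_append]
      congr 1
  choose nx hnx using step
  let P : ∀ n, {p // Ok n p} := fun n => Nat.rec ⟨[], trivial, by
    change R (π 0) v
    rw [h0]; exact huv, by simp⟩ (fun n p => nx n p) n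
  have hPs : ∀ n, (P n).1 <+: (P (n + 1)).1 := fun n => hnx n (P n)
  obtain ⟨x, hx1, hx2⟩ := path_limit G hG v (fun n => (P n).1) hPs (fun n => (P n).2.1)
  have hin : (fun i => (x i).1) ∈ epsObjective W := by
    apply hs (fun i => pathEnd v ((List.range i).map x)) _ rfl
    intro i
    have := hx1 (i + 1)
    rw [List.range_succ, List.map_append, listPath_append] at this
    simp only [List.range_succ, List.map_append, pathEnd_append]
    exact this.2.1
  refine epsObj_of_prefixes W _ _ (fun k => ?_) hin
  obtain ⟨k', hk'⟩ := hx2 k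
  refine ⟨k', ?_⟩
  have := hk'.filterMap Prod.fst
  rw [(P k).2.2.2, List.filterMap_map] at this
  exact this

theorem range_filterMap_cons (w : ℕ → Option C) (h : w 0 = none) (k : ℕ) :
    (List.range (k + 1)).filterMap w = (List.range k).filterMap (fun i => w (i + 1)) := by
  rw [List.range_succ_eq_map, List.filterMap_cons, h, List.filterMap_map]
  rfl

/-- successors by an epsilon edge of satisfying vertices are satisfying -/
theorem sat_succ (W : Set (ℕ → C)) (G : Pregraph (Option C) V) (v v' : V)
    (he : G.Edge v none v') (hs : G.VertexSat (epsObjective W) v) :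
    G.VertexSat (epsObjective W) v' := by
  intro π γ h0 hp
  let π' : ℕ → V := fun i => Nat.casesOn i v π
  let γ' : ℕ → Option C := fun i => Nat.casesOn i none γ
  have : γ' ∈ epsObjective W := by
    apply hs π' γ' rfl
    intro i
    cases i with
    | zero => change G.Edge v none (π 0); rw [h0]; exact he
    | succ i => exact hp i
  refine epsObj_of_prefixes W _ _ (fun k => ⟨k + 1, ?_⟩) this
  rw [range_filterMap_cons _ rfl]

theorem sat_pred (W : Set (ℕ → C)) (G : Pregraph (Option C) V) (v : V)
    (h : ∀ c v', G.Edge v c v' → c = none ∧ G.VertexSat (epsObjective W) v') :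
    G.VertexSat (epsObjective W) v := by
  intro π γ h0 hp
  have h1 := hp 0
  rw [h0] at h1
  obtain ⟨hc, hs⟩ := h _ _ h1
  have := hs (fun i => π (i + 1)) (fun i => γ (i + 1)) rfl (fun i => hp (i + 1))
  refine epsObj_of_prefixes W _ _ (fun k => ⟨k, ?_⟩) this
  cases k with
  | zero => simp
  | succ k =>
    rw [range_filterMap_cons _ hc, List.range_succ, List.filterMap_append]
    exact List.prefix_append _ _

theorem tree_lift (T : Pregraph C V) (t₀ : V) (hT : T.IsPretree t₀) (S : Pregraph C V')
    (R : V → V' → Prop) (s : V') (hs : R t₀ s)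
    (hR : ∀ t s c t', R t s → T.Edge t c t' → ∃ s', R t' s' ∧ S.Edge s c s') :
    ∃ f : V → V', f t₀ = s ∧ (∀ t, R t (f t)) ∧
      ∀ t c t', T.Edge t c t' → S.Edge (f t) c (f t') := by
  classical
  let nx : V' → C × V → V' := fun s e =>
    if h : ∃ s', R e.2 s' ∧ S.Edge s e.1 s' then h.choose else s
  have hnx : ∀ t s c t', R t s → T.Edge t c t' → R t' (nx s (c, t')) ∧ S.Edge s c (nx s (c, t')) := by
    intro t s c t' h1 h2
    have h := hR t s c t' h1 h2
    have : nx s (c, t') = h.choose := dif_pos h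
    rw [this]
    exact h.choose_spec
  choose p hp hu using hT
  have inv : ∀ q : List (C × V), ∀ t s, R t s → T.ListPath t q →
      R (pathEnd t q) (q.foldl nx s) := by
    intro q
    induction q with
    | nil => intro t s h _; exact h
    | cons e q ih =>
      intro t s h hl
      exact ih _ _ (hnx t s e.1 e.2 h hl.1).1 hl.2
  have hRt : ∀ t, R t ((p t).foldl nx s) := by
    intro t
    have := inv (p t) t₀ s hs (hp t).1
    rwa [(hp t).2] at this
  refine ⟨fun t => (p t).foldl nx s, ?_, hRt, ?_⟩
  · have : p t₀ = [] := (hu t₀ [] ⟨trivial, rfl⟩).symm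
    simp [this]
  · intro t c t' he
    have : p t ++ [(c, t')] = p t' := by
      apply hu
      refine ⟨?_, ?_⟩
      · rw [listPath_append, (hp t).2]
        exact ⟨(hp t).1, he, trivial⟩
      · rw [pathEnd_append]; rfl
    simp only [← this, List.foldl_append]
    exact (hnx t _ c t' (hRt t) he).2

/-- Trees (more generally, graphs) on subsets of `K` whose root satisfies the objective. -/
structure Idx (W : Set (ℕ → C)) (K : Type u) : Type u where
  A : Set K
  E : Pregraph (Option C) A
  r : A
  ns : E.NoSinks
  sat : E.VertexSat (epsObjective W) r

abbrev F (W : Set (ℕ → C)) (K : Type u) : Type u := Σ i : Idx W K, i.A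

/-- Vertices of the choice game. -/
inductive GV (W : Set (ℕ → C)) (K : Type u) : Type u
  | root : GV W K
  | pt (f : F W K) : GV W K
  | ch (A : Set (F W K)) (h : A.Nonempty) : GV W K

inductive GEdge (W : Set (ℕ → C)) (K : Type u) : GV W K → Option C → GV W K → Prop
  | start (i : Idx W K) : GEdge W K .root none (.pt ⟨i, i.r⟩)
  | loop (h : IsEmpty (Idx W K)) : GEdge W K .root none .root
  | mv (i : Idx W K) (a b : i.A) (c : Option C) (h : i.E.Edge a c b) :
      GEdge W K (.pt ⟨i, a⟩) c (.pt ⟨i, b⟩)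
  | ask (f : F W K) (A : Set (F W K)) (hA : A.Nonempty) (h : f ∈ A) :
      GEdge W K (.pt f) none (.ch A hA)
  | ans (f : F W K) (A : Set (F W K)) (hA : A.Nonempty) (h : f ∈ A) :
      GEdge W K (.ch A hA) none (.pt f)

def GG (W : Set (ℕ → C)) (K : Type u) : Pregraph (Option C) (GV W K) := ⟨GEdge W K⟩

def GEve (W : Set (ℕ → C)) (K : Type u) : Set (GV W K) := {x | ∃ A h, x = .ch A h}

theorem GG_noSinks (W : Set (ℕ → C)) (K : Type u) : (GG W K).NoSinks := by
  rintro (_ | ⟨i, a⟩ | ⟨A, hA⟩)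
  · rcases isEmpty_or_nonempty (Idx W K) with h | ⟨⟨i⟩⟩
    · exact ⟨_, _, GEdge.loop h⟩
    · exact ⟨_, _, GEdge.start i⟩
  · obtain ⟨c, b, h⟩ := i.ns a
    exact ⟨_, _, GEdge.mv i a b c h⟩
  · obtain ⟨f, hf⟩ := hA
    exact ⟨_, _, GEdge.ans f A ⟨f, hf⟩ hf⟩

/-- States of Eve's obvious strategy. -/
inductive SV (W : Set (ℕ → C)) (K : Type u) : Type u
  | root : SV W K
  | pt (f : F W K) : SV W K
  | ch (f : F W K) (A : Set (F W K)) (h : f ∈ A) : SV W K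

inductive SEdge (W : Set (ℕ → C)) (K : Type u) : SV W K → Option C → SV W K → Prop
  | start (i : Idx W K) : SEdge W K .root none (.pt ⟨i, i.r⟩)
  | loop (h : IsEmpty (Idx W K)) : SEdge W K .root none .root
  | mv (i : Idx W K) (a b : i.A) (c : Option C) (h : i.E.Edge a c b) :
      SEdge W K (.pt ⟨i, a⟩) c (.pt ⟨i, b⟩)
  | ask (f : F W K) (A : Set (F W K)) (h : f ∈ A) :
      SEdge W K (.pt f) none (.ch f A h)
  | ans (f : F W K) (A : Set (F W K)) (h : f ∈ A) :
      SEdge W K (.ch f A h) none (.pt f)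

def SS (W : Set (ℕ → C)) (K : Type u) : Pregraph (Option C) (SV W K) := ⟨SEdge W K⟩

def Sproj (W : Set (ℕ → C)) (K : Type u) : SV W K → GV W K
  | .root => .root
  | .pt f => .pt f
  | .ch f A h => .ch A ⟨f, h⟩

theorem SS_strategy (W : Set (ℕ → C)) (K : Type u) :
    IsStrategy (GG W K) (GEve W K) .root (SS W K) (Sproj W K) .root := by
  refine ⟨?_, ?_, rfl, ?_⟩
  · rintro (_ | ⟨i, a⟩ | ⟨f, A, hA⟩)
    · rcases isEmpty_or_nonempty (Idx W K) with h | ⟨⟨i⟩⟩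
      · exact ⟨_, _, SEdge.loop h⟩
      · exact ⟨_, _, SEdge.start i⟩
    · obtain ⟨c, b, h⟩ := i.ns a
      exact ⟨_, _, SEdge.mv i a b c h⟩
    · exact ⟨_, _, SEdge.ans f A hA⟩
  · intro s c s' h
    cases h with
    | start i => exact GEdge.start i
    | loop h => exact GEdge.loop h
    | mv i a b c h => exact GEdge.mv i a b c h
    | ask f A h => exact GEdge.ask f A _ h
    | ans f A h => exact GEdge.ans f A _ h
  · intro v hv c v' he s hs
    cases s with
    | root =>
      subst hs
      cases he with
      | start i => exact ⟨_, rfl, SEdge.start i⟩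
      | loop h => exact ⟨_, rfl, SEdge.loop h⟩
    | pt f =>
      subst hs
      cases he with
      | mv i a b c h => exact ⟨_, rfl, SEdge.mv i a b c h⟩
      | ask f A hA h => exact ⟨_, rfl, SEdge.ask f A h⟩
    | ch f A h => exact absurd ⟨A, _, hs.symm⟩ hv

theorem SS_sat (W : Set (ℕ → C)) (K : Type u) (hne : Nonempty (Idx W K)) :
    (SS W K).VertexSat (epsObjective W) .root := by
  apply sat_pred
  intro c v' he
  cases he with
  | loop h => exact (not_isEmpty_of_nonempty _ h).elim
  | start i =>
    refine ⟨rfl, ?_⟩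
    refine sat_of_sim W i.E (SS W K) i.ns
      (fun s a => s = .pt ⟨i, a⟩ ∨ ∃ A h, s = .ch ⟨i, a⟩ A h) ?_ _ i.r (Or.inl rfl) i.sat
    rintro u a c u' (rfl | ⟨A, h, rfl⟩) he
    · cases he with
      | mv _ _ b _ h => exact ⟨b, Or.inl rfl, Sim.single h⟩
      | ask _ A h => exact ⟨a, Or.inr ⟨A, h, rfl⟩, Sim.nil _ _⟩
    · cases he with
      | ans _ _ _ => exact ⟨a, Or.inl rfl, Sim.nil _ _⟩

/-- Transport of a satisfying tree to an index. -/
theorem exists_idx (W : Set (ℕ → C)) (κ : Cardinal.{u}) (T : Pregraph (Option C) V) (t₀ : V)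
    (hns : T.NoSinks) (hκ : #V < κ) (hs : T.VertexSat (epsObjective W) t₀) :
    ∃ (i : Idx W κ.out) (e : V → i.A), e t₀ = i.r ∧
      ∀ t c t', T.Edge t c t' → i.E.Edge (e t) c (e t') := by
  have hle : #V ≤ #κ.out := by rw [Cardinal.mk_out]; exact hκ.le
  obtain ⟨j⟩ := hle
  let e : V ≃ Set.range j := Equiv.ofInjective j j.injective
  refine ⟨⟨Set.range j, ⟨fun a c b => T.Edge (e.symm a) c (e.symm b)⟩, e t₀, ?_, ?_⟩, e, rfl, ?_⟩
  · intro a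
    obtain ⟨c, t, h⟩ := hns (e.symm a)
    exact ⟨c, e t, by simpa using h⟩
  · intro π γ h0 hp
    exact hs (fun i => e.symm (π i)) γ (by simp [h0]) hp
  · intro t c t' h
    simpa using h

end EpsAux

open EpsAux Pregraph

theorem epsMemory_implies_epsSeparated_universal
    {C : Type u} (W : Set (ℕ → C)) (μ : Cardinal.{u})
    (hmem : HasEpsMemLE (objValuation W) μ) :
    ∀ κ : Cardinal.{u},
      ∃ (VU : Type u) (M : Type u) (U : Pregraph (Option C) VU) (part : VU → M),
        IsEpsSeparated U part ∧ EpsWellFounded U ∧ #M ≤ μ ∧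
        IsUniversal κ (epsExtension (objValuation W)) U := by
  classical
  intro κ
  obtain ⟨M, D, S, s₀, hM, ⟨⟨hSns, hSmor, hS0, hSadam⟩, hSeps⟩, hval⟩ :=
    hmem _ (GG W κ.out) (GG_noSinks W κ.out) (GEve W κ.out) .root
  -- the strategy is winning as soon as there is some satisfying tree
  have hSsat : Nonempty (Idx W κ.out) → S.VertexSat (epsObjective W) s₀ := by
    intro hne
    by_contra hcon
    have h1 := hval ((value_iff W S s₀).2 hcon)
    unfold gameValue at h1
    rw [sInf_Prop_eq] at h1
    have h2 := h1 _ ⟨_, SS W κ.out, Sproj W κ.out, .root, SS_strategy W κ.out, rfl⟩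
    exact (value_iff W _ _).1 h2 (SS_sat W κ.out hne)
  let X : Type u := {s : D // ∃ f, s.1.1 = GV.pt f}
  let mem : X → M := fun x => x.1.1.2
  let L : X → Option C → X → Prop := fun x c y => Sim S x.1 c y.1 ∧ (c = none → mem x = mem y)
  have Lrefl : ∀ x, L x none x := fun x => ⟨Sim.nil _ _, fun _ => rfl⟩
  have Lcomp : ∀ {a b c b' a'}, L a none b → L b c b' → L b' none a' → L a c a' := by
    intro a b c b' a' h1 h2 h3
    exact ⟨Sim.comp h1.1 h2.1 h3.1, fun h => (h1.2 rfl).trans ((h2.2 h).trans (h3.2 rfl))⟩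
  -- key property
  have key : ∀ (m : M) (Z : Set X), Z.Nonempty → (∀ z ∈ Z, mem z = m) →
      ∃ y ∈ Z, ∀ z ∈ Z, L z none y := by
    intro m Z ⟨z₀, hz₀⟩ hZ
    let A : Set (F W κ.out) := {f | ∃ z ∈ Z, z.1.1.1 = GV.pt f}
    have hA : A.Nonempty := by
      obtain ⟨f, hf⟩ := z₀.2
      exact ⟨f, z₀, hz₀, hf⟩
    have ask : ∀ z ∈ Z, ∃ s : D, s.1 = (GV.ch A hA, m) ∧ S.Edge z.1 none s := by
      intro z hz
      obtain ⟨f, hf⟩ := z.2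
      have hnot : GV.pt f ∉ GEve W κ.out := by rintro ⟨_, _, h⟩; cases h
      obtain ⟨s', h1, h2⟩ := hSadam _ hnot none _ (GEdge.ask f A hA ⟨z, hz, hf⟩) z.1 hf
      refine ⟨s', Prod.ext h1 ?_, h2⟩
      rw [← hSeps _ _ h2]
      exact hZ z hz
    obtain ⟨s, hs, _⟩ := ask z₀ hz₀
    obtain ⟨c, s', hs'⟩ := hSns s
    have hg := hSmor hs'
    simp only [hs] at hg
    have : c = none ∧ ∃ f ∈ A, s'.1.1 = GV.pt f := by
      generalize s'.1.1 = q at hg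
      cases hg with
      | ans f _ _ h => exact ⟨rfl, f, h, rfl⟩
    obtain ⟨rfl, f, ⟨y, hy, hyf⟩, hsf⟩ := this
    have hys : y.1 = s' := by
      apply Subtype.ext
      refine Prod.ext (hyf.trans hsf.symm) ?_
      rw [← hSeps _ _ hs', hs]
      exact hZ y hy
    refine ⟨y, hy, fun z hz => ⟨?_, fun _ => (hZ z hz).trans (hZ y hy).symm⟩⟩
    obtain ⟨s1, hs1, he1⟩ := ask z hz
    have : s1 = s := Subtype.ext (hs1.trans hs.symm)
    subst this
    rw [hys]
    exact Sim.comp (Sim.nil _ _) (Sim.single he1) (Sim.single hs')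
  let st : Setoid X := ⟨fun x y => L x none y ∧ L y none x,
    fun x => ⟨Lrefl x, Lrefl x⟩, fun h => ⟨h.2, h.1⟩,
    fun h1 h2 => ⟨Lcomp h1.1 h2.1 (Lrefl _), Lcomp h2.2 h1.2 (Lrefl _)⟩⟩
  let Q : Type u := Quotient st
  have hout : ∀ x : X, L (Quotient.out (Quotient.mk st x)) none x ∧
      L x none (Quotient.out (Quotient.mk st x)) := fun x => Quotient.mk_out x
  let part : Option Q → M := fun q => match q with
    | none => s₀.1.2
    | some q => mem q.out
  let UE : Option Q → Option C → Option Q → Prop := fun q c q' => match q, q' with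
    | none, q' => c = none → s₀.1.2 = part q'
    | some q, some q' => L q.out c q'.out
    | some _, none => False
  let U : Pregraph (Option C) (Option Q) := ⟨UE⟩
  have Uanti : ∀ q q' : Q, L q.out none q'.out → L q'.out none q.out → q = q' := by
    intro q q' h1 h2
    rw [← Quotient.out_eq q, ← Quotient.out_eq q']
    exact Quotient.sound ⟨h1, h2⟩
  have Utop : ∀ (q : Q) c, ¬ U.Edge (some q) c none := fun q c h => h
  have Usome : ∀ (q q' : Q) c, U.Edge (some q) c (some q') ↔ L q.out c q'.out :=
    fun q q' c => Iff.rfl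
  have Unone : ∀ q c, U.Edge none c q ↔ (c = none → s₀.1.2 = part q) := fun q c => Iff.rfl
  have same : ∀ q q', U.Edge q none q' → part q = part q' := by
    intro q q' h
    cases q with
    | none => exact h rfl
    | some q =>
      cases q' with
      | none => exact h.elim
      | some q' => exact h.2 rfl
  refine ⟨Option Q, M, U, part, ⟨?_, ?_, ?_, same, ?_⟩, ?_, hM, ?_⟩
  · intro q
    cases q with
    | none => exact fun _ => rfl
    | some q => exact Lrefl _
  · intro q q' h1 h2
    cases q with
    | none =>
      cases q' with
      | none => rfl
      | some q' => exact h2.elim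
    | some q =>
      cases q' with
      | none => exact h1.elim
      | some q' => rw [Uanti q q' h1 h2]
  · intro a b c b' a' h1 h2 h3
    cases a with
    | none =>
      rw [Unone]
      rintro rfl
      exact (same _ _ h1).trans ((same _ _ h2).trans (same _ _ h3))
    | some a =>
      cases b with
      | none => exact h1.elim
      | some b =>
        cases b' with
        | none => exact h2.elim
        | some b' =>
          cases a' with
          | none => exact h3.elim
          | some a' => exact Lcomp h1 h2 h3
  · intro q q' h
    cases q with
    | none => exact Or.inl fun _ => h
    | some q =>
      cases q' with
      | none => exact Or.inr fun _ => h.symm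
      | some q' =>
        obtain ⟨y, hy, hz⟩ := key (mem q.out) {q.out, q'.out} ⟨_, Or.inl rfl⟩ (by
          rintro z (rfl | rfl)
          · rfl
          · exact h.symm)
        rcases hy with rfl | rfl
        · exact Or.inr (hz _ (Or.inr rfl))
        · exact Or.inl (hz _ (Or.inl rfl))
  · rw [EpsWellFounded, WellFounded.wellFounded_iff_has_min]
    intro Z hZ
    by_cases hsome : ∃ q : Q, some q ∈ Z
    · obtain ⟨q, hq⟩ := hsome
      obtain ⟨y, ⟨q₁, hq₁, hqm, rfl⟩, hmin⟩ := key (mem q.out)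
        {x | ∃ q' : Q, some q' ∈ Z ∧ mem q'.out = mem q.out ∧ q'.out = x}
        ⟨_, q, hq, rfl, rfl⟩ (by rintro z ⟨q', _, h, rfl⟩; exact h)
      refine ⟨some q₁, hq₁, ?_⟩
      rintro x hx ⟨he, hne⟩
      cases x with
      | none => exact he
      | some x =>
        apply hne
        rw [Uanti x q₁ (hmin _ ⟨x, hx, (he.2 rfl).symm.trans hqm, rfl⟩) he]
    · obtain ⟨z, hz⟩ := hZ
      have hn : ∀ x ∈ Z, x = none := by
        intro x hx
        cases x with
        | none => rfl
        | some x => exact (hsome ⟨x, hx⟩).elim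
      exact ⟨z, hz, fun x hx h => h.2 ((hn x hx).trans (hn z hz).symm)⟩
  · intro VT T t₀ hT hκ
    by_cases hs : T.VertexSat (epsObjective W) t₀
    · obtain ⟨i, e, he0, he⟩ := exists_idx W κ T t₀ hT.1 hκ hs
      have hroot : GV.root ∉ GEve W κ.out := by rintro ⟨_, _, h⟩; cases h
      obtain ⟨s₁, hs₁, hs₁e⟩ := hSadam _ hroot none _ (GEdge.start i) s₀ hS0
      have hs₁sat := sat_succ W S s₀ s₁ hs₁e (hSsat ⟨i⟩)
      obtain ⟨f, hf0, hfR, hfe⟩ := tree_lift T t₀ hT.2 S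
        (fun t s => s.1.1 = GV.pt ⟨i, e t⟩) s₁ (by rw [he0]; exact hs₁) (by
          intro t s c t' h1 h2
          have hnot : (GV.pt ⟨i, e t⟩ : GV W κ.out) ∉ GEve W κ.out := by rintro ⟨_, _, h⟩; cases h
          exact hSadam _ hnot c _ (GEdge.mv i _ _ c (he _ _ _ h2)) s h1)
      let g : VT → X := fun t => ⟨f t, _, hfR t⟩
      refine ⟨fun t => some (Quotient.mk st (g t)), ?_, ?_⟩
      · intro t c t' h
        refine Lcomp (hout (g t)).1 ⟨Sim.single (hfe _ _ _ h), ?_⟩ (hout (g t')).2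
        rintro rfl
        exact hSeps _ _ (hfe _ _ _ h)
      · intro hv
        refine ((value_iff W _ _).1 hv ?_).elim
        refine sat_of_sim W S U hSns (fun q s => ∃ q' : Q, q = some q' ∧ Sim S s none q'.out.1)
          ?_ _ s₁ ⟨_, rfl, ?_⟩ hs₁sat
        · rintro q s c q' ⟨q, rfl, h⟩ hE
          cases q' with
          | none => exact hE.elim
          | some q' => exact ⟨_, ⟨q', rfl, Sim.nil _ _⟩, Sim.comp h hE.1 (Sim.nil _ _)⟩
        · rw [← hf0]
          exact (hout (g t₀)).2.1
    · refine ⟨fun _ => none, fun _ _ _ _ _ => rfl, fun _ => (value_iff W _ _).2 hs⟩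
end

section
/- (Structuration of C^ε-trees.) Let val : C^ω → X be a valuation with ε-memory ≤ μ and let T be a C^ε-tree with root t₀. Then there exists an ε-separated well-monotone graph U of breadth ≤ μ and a morphism φ : T → U with val^ε_U(φ(t₀)) ≤ val^ε_T(t₀) (so the value at the root is preserved). Moreover, if val has ε-chromatic memory ≤ μ, then U can be taken chromatic. -/
universe u v

open Cardinal

/-- A valuation has ε-chromatic memory ≤ μ: in every ε-game, the value is attained by an
ε-chromatic strategy of memory ≤ μ. -/
def HasEpsChromMemLE {C : Type u} {X : Type v} [CompleteLinearOrder X]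
    (val : (ℕ → C) → X) (μ : Cardinal.{u}) : Prop :=
  ∀ (V : Type u) (G : Pregraph (Option C) V), G.NoSinks → ∀ (VEve : Set V) (v₀ : V),
    ∃ (M : Type u) (D : Set (V × M)) (S : Pregraph (Option C) ↥D) (s₀ : ↥D),
      #M ≤ μ ∧ IsEpsStrategy G VEve v₀ D S s₀ ∧ IsChromaticStrat D S ∧
      S.valueAt (epsExtension val) s₀ ≤ gameValue G VEve v₀ (epsExtension val)

/-! ### Completions -/

theorem isCompletion_of_prefix {C : Type u} {γ γ' : ℕ → Option C} {w : ℕ → C}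
    (h : ∀ k, ∃ k', (List.range k).filterMap γ <+: (List.range k').filterMap γ')
    (hw : IsCompletion γ' w) : IsCompletion γ w := by
  intro k n hn
  obtain ⟨k', hk'⟩ := h k
  have h1 := hw k' n (lt_of_lt_of_le hn hk'.length_le)
  rw [← h1]
  simp only [List.get_eq_getElem]
  exact hk'.getElem hn

theorem epsExtension_le_of_prefix {C : Type u} {X : Type v} [CompleteLinearOrder X]
    (val : (ℕ → C) → X) {γ γ' : ℕ → Option C}
    (h : ∀ k, ∃ k', (List.range k).filterMap γ <+: (List.range k').filterMap γ') :
    epsExtension val γ ≤ epsExtension val γ' := by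
  apply sInf_le_sInf
  rintro x ⟨w, hw, rfl⟩
  exact ⟨w, isCompletion_of_prefix h hw, rfl⟩

theorem filterMap_range_succ {C : Type u} (γ : ℕ → Option C) (k : ℕ) :
    (List.range (k + 1)).filterMap γ = (List.range k).filterMap γ ++ (γ k).toList := by
  rw [List.range_succ, List.filterMap_append]
  cases h : γ k <;> simp [h]

/-! ### Paths with at most one non-ε colour -/

inductive EP {C V : Type u} (S : Pregraph (Option C) V) : ℕ → V → Option C → V → Prop
  | base {s c x} : S.Edge s c x → EP S 0 s c x
  | eps {n s s' c x} : S.Edge s none s' → EP S n s' c x → EP S (n + 1) s c x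
  | col {n s s' c x} : S.Edge s (some c) s' → EP S n s' none x → EP S (n + 1) s (some c) x

def PP {C V : Type u} (S : Pregraph (Option C) V) (s : V) (c : Option C) (x : V) : Prop :=
  ∃ n, EP S n s c x

theorem PP.eps_left_aux {C V : Type u} {S : Pregraph (Option C) V} {n : ℕ} {a b d : V}
    {e c : Option C}
    (h : EP S n a e b) (he : e = none) (h' : PP S b c d) : PP S a c d := by
  induction h with
  | base h => subst he; obtain ⟨m, hm⟩ := h'; exact ⟨_, EP.eps h hm⟩
  | eps h _ ih => obtain ⟨m, hm⟩ := ih he h'; exact ⟨_, EP.eps h hm⟩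
  | col => cases he

theorem PP.eps_left {C V : Type u} {S : Pregraph (Option C) V} {a b d : V} {c : Option C}
    (h : PP S a none b) (h' : PP S b c d) : PP S a c d := by
  obtain ⟨n, hn⟩ := h
  exact PP.eps_left_aux hn rfl h'

theorem PP.eps_right {C V : Type u} {S : Pregraph (Option C) V} {a b d : V} {c : Option C}
    (h : PP S a c b) (h' : PP S b none d) : PP S a c d := by
  obtain ⟨n, hn⟩ := h
  induction hn with
  | @base s c x h =>
    obtain ⟨m, hm⟩ := h'
    cases c with
    | none => exact ⟨_, EP.eps h hm⟩
    | some c => exact ⟨_, EP.col h hm⟩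
  | eps h _ ih => obtain ⟨m, hm⟩ := ih h'; exact ⟨_, EP.eps h hm⟩
  | col h _ ih => obtain ⟨m, hm⟩ := ih h'; exact ⟨_, EP.col h hm⟩

/-- State of the unfolding of a sequence of finite paths. -/
structure ExpState {C V : Type u} (S : Pregraph (Option C) V) (x : ℕ → V)
    (γ : ℕ → Option C) : Type u where
  i : ℕ
  c : Option C
  n : ℕ
  s : V
  l : List C
  path : EP S n s c (x (i + 1))
  inv : ∃ l₀, l = (List.range i).filterMap γ ++ l₀ ∧ l₀ ++ c.toList = (γ i).toList

theorem ExpState.step {C V : Type u} {S : Pregraph (Option C) V} {x : ℕ → V}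
    {γ : ℕ → Option C} (h : ∀ i, PP S (x i) (γ i) (x (i + 1))) (σ : ExpState S x γ) :
    ∃ (a : Option C) (τ : ExpState S x γ), S.Edge σ.s a τ.s ∧ τ.l = σ.l ++ a.toList ∧
      ((τ.i = σ.i ∧ τ.n < σ.n) ∨ τ.i = σ.i + 1) := by
  obtain ⟨i, c, n, s, l, path, l₀, rfl, hl⟩ := σ
  cases path with
  | base he =>
    obtain ⟨m, hm⟩ := h (i + 1)
    refine ⟨c, ⟨i + 1, γ (i + 1), m, x (i + 1), _, hm, [], rfl, by simp⟩, he, ?_, Or.inr rfl⟩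
    simp only [List.append_nil, filterMap_range_succ, List.append_assoc, hl]
  | @eps n _ s' _ _ he hp =>
    refine ⟨none, ⟨i, c, n, s', _, hp, l₀, rfl, hl⟩, he, by simp, Or.inl ⟨rfl, by simp⟩⟩
  | @col n _ s' c _ he hp =>
    refine ⟨some c, ⟨i, none, n, s', _, hp, l₀ ++ [c], rfl, by simpa using hl⟩, he, by simp,
      Or.inl ⟨rfl, by simp⟩⟩

theorem exists_expansion {C V : Type u} {S : Pregraph (Option C) V} {x : ℕ → V}
    {γ : ℕ → Option C} (h : ∀ i, PP S (x i) (γ i) (x (i + 1))) :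
    ∃ π γ', π 0 = x 0 ∧ S.InfPath π γ' ∧
      ∀ k, ∃ k', (List.range k).filterMap γ <+: (List.range k').filterMap γ' := by
  choose col nxt hedge hl hprog using fun σ : ExpState S x γ => ExpState.step h σ
  obtain ⟨m, hm⟩ := h 0
  let σ₀ : ExpState S x γ := ⟨0, γ 0, m, x 0, [], hm, [], by simp, by simp⟩
  let σ : ℕ → ExpState S x γ := fun k => nxt^[k] σ₀
  have hσ : ∀ k, σ (k + 1) = nxt (σ k) := fun k => Function.iterate_succ_apply' _ _ _
  refine ⟨fun k => (σ k).s, fun k => col (σ k), rfl, ?_, ?_⟩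
  · intro k
    simp only [hσ]
    exact hedge _
  · have hL : ∀ k, (σ k).l = (List.range k).filterMap (fun k => col (σ k)) := by
      intro k
      induction k with
      | zero => rfl
      | succ k ih => rw [filterMap_range_succ, hσ, hl, ih]
    have hP : ∀ n k, (σ k).n = n → ∃ k', (σ k').i = (σ k).i + 1 := by
      intro n
      induction n using Nat.strong_induction_on with
      | _ n ih =>
        intro k hk
        rcases hprog (σ k) with ⟨h1, h2⟩ | h1
        · rw [← hσ] at h1 h2
          rw [← h1]
          exact ih _ (hk ▸ h2) (k + 1) rfl
        · exact ⟨k + 1, by rw [hσ, h1]⟩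
    have hQ : ∀ k, ∃ k', (σ k').i = k := by
      intro k
      induction k with
      | zero => exact ⟨0, rfl⟩
      | succ k ih =>
        obtain ⟨k', hk'⟩ := ih
        obtain ⟨k'', h''⟩ := hP _ k' rfl
        exact ⟨k'', by rw [h'', hk']⟩
    intro k
    obtain ⟨k', hk'⟩ := hQ k
    refine ⟨k', ?_⟩
    rw [← hL]
    obtain ⟨l₀, h0, -⟩ := (σ k').inv
    rw [h0, hk']
    exact List.prefix_append _ _

/-! ### Removing stuttering -/

theorem exists_infPath {C V : Type u} {G : Pregraph C V} (hG : G.NoSinks) (v : V) :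
    ∃ π γ, π 0 = v ∧ G.InfPath π γ := by
  choose col nxt hedge using hG
  refine ⟨fun k => nxt^[k] v, fun k => col (nxt^[k] v), rfl, fun k => ?_⟩
  simp only [Function.iterate_succ_apply']
  exact hedge _

theorem destutter_inf {C V : Type u} {G : Pregraph (Option C) V} {x : ℕ → V}
    {γ : ℕ → Option C} (p : ℕ → Prop) (hp : {i | p i}.Infinite)
    (h1 : ∀ i, p i → G.Edge (x i) (γ i) (x (i + 1)))
    (h2 : ∀ i, ¬ p i → x (i + 1) = x i ∧ γ i = none) :
    ∃ π γ', π 0 = x 0 ∧ G.InfPath π γ' ∧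
      ∀ k, ∃ k', (List.range k).filterMap γ <+: (List.range k').filterMap γ' := by
  classical
  have hst : ∀ d n, (∀ i, n ≤ i → i < n + d → ¬ p i) → x (n + d) = x n := by
    intro d n
    induction d with
    | zero => intro _; rfl
    | succ d ih =>
      intro hd
      rw [← ih (fun i hi hi' => hd i hi (by omega)), ← add_assoc]
      exact (h2 _ (hd _ (by omega) (by omega))).1
  have hx : ∀ n, x (Nat.nth p (Nat.count p n)) = x n := by
    intro n
    have hle : n ≤ Nat.nth p (Nat.count p n) := Nat.le_nth_count hp n
    obtain ⟨d, hd⟩ := Nat.exists_eq_add_of_le hle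
    rw [hd]
    apply hst
    intro i hi hi' hpi
    rw [← hd] at hi'
    have h3 := Nat.count_monotone p hi
    have h4 : Nat.nth p (Nat.count p i) = i := Nat.nth_count hpi
    have h5 := (Nat.nth_lt_nth hp).1 (h4 ▸ hi' : Nat.nth p (Nat.count p i) < _)
    omega
  refine ⟨fun k => x (Nat.nth p k), fun k => γ (Nat.nth p k), ?_, ?_, ?_⟩
  · simpa using hx 0
  · intro k
    have h3 := h1 _ (Nat.nth_mem_of_infinite hp k)
    have h4 := hx (Nat.nth p k + 1)
    rw [Nat.count_succ, Nat.count_nth_of_infinite hp, if_pos (Nat.nth_mem_of_infinite hp k)] at h4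
    simp only [h4]
    exact h3
  · intro k
    refine ⟨Nat.count p k, ?_⟩
    suffices hEq : (List.range k).filterMap γ =
        (List.range (Nat.count p k)).filterMap (fun k => γ (Nat.nth p k)) by
      rw [hEq]
    induction k with
    | zero => simp
    | succ k ih =>
      rw [filterMap_range_succ, Nat.count_succ]
      by_cases hk : p k
      · rw [if_pos hk, filterMap_range_succ, ih, Nat.nth_count hk]
      · rw [if_neg hk, (h2 k hk).2, ih]; simp

theorem destutter {C V : Type u} {G : Pregraph (Option C) V} (hG : G.NoSinks) {x : ℕ → V}
    {γ : ℕ → Option C}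
    (h : ∀ i, G.Edge (x i) (γ i) (x (i + 1)) ∨ (x (i + 1) = x i ∧ γ i = none)) :
    ∃ π γ', π 0 = x 0 ∧ G.InfPath π γ' ∧
      ∀ k, ∃ k', (List.range k).filterMap γ <+: (List.range k').filterMap γ' := by
  by_cases hp : {i | G.Edge (x i) (γ i) (x (i + 1))}.Infinite
  · exact destutter_inf _ hp (fun i hi => hi) (fun i hi => (h i).resolve_left hi)
  · rw [Set.not_infinite] at hp
    obtain ⟨N, hN⟩ := hp.bddAbove
    obtain ⟨y, η, hy0, hy⟩ := exists_infPath hG (x (N + 1))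
    let x' : ℕ → V := fun i => if i ≤ N then x i else y (i - (N + 1))
    let γ₁ : ℕ → Option C := fun i => if i ≤ N then γ i else η (i - (N + 1))
    have hx' : ∀ i, i ≤ N + 1 → x' i = x i := by
      intro i hi
      by_cases h' : i ≤ N
      · simp [x', h']
      · have : i = N + 1 := by omega
        subst this
        simp [x', hy0]
    have hlate : ∀ i, N < i → G.Edge (x' i) (γ₁ i) (x' (i + 1)) := by
      intro i hi
      have e : i + 1 - (N + 1) = (i - (N + 1)) + 1 := by omega
      simp only [x', γ₁, if_neg (not_le.2 hi), if_neg (show ¬ i + 1 ≤ N by omega), e]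
      exact hy _
    have key : ∃ π γ', π 0 = x' 0 ∧ G.InfPath π γ' ∧
      ∀ k, ∃ k', (List.range k).filterMap γ₁ <+: (List.range k').filterMap γ' := by
      apply destutter_inf (fun i => G.Edge (x' i) (γ₁ i) (x' (i + 1)))
      · exact (Set.Ioi_infinite N).mono (fun i hi => hlate i hi)
      · exact fun i hi => hi
      · intro i hi
        by_cases h' : i ≤ N
        · have e1 := hx' i (by omega)
          have e2 := hx' (i + 1) (by omega)
          have e3 : γ₁ i = γ i := by simp [γ₁, h']
          rw [e1, e2, e3] at hi
          rw [e1, e2, e3]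
          exact (h i).resolve_left hi
        · exact absurd (hlate i (not_le.1 h')) hi
    obtain ⟨π, γ', hπ, hpath, hpre⟩ := key
    refine ⟨π, γ', hπ.trans (hx' 0 (by omega)), hpath, ?_⟩
    have hmin : ∀ k, (List.range k).filterMap γ =
        (List.range (min k (N + 1))).filterMap γ₁ := by
      intro k
      induction k with
      | zero => simp
      | succ k ih =>
        rw [filterMap_range_succ, ih]
        by_cases h' : k ≤ N
        · rw [min_eq_left (by omega), min_eq_left (by omega), filterMap_range_succ]
          simp [γ₁, h']
        · rw [min_eq_right (by omega), min_eq_right (by omega)]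
          have : γ k = none :=
            ((h k).resolve_left (fun hk => h' (hN hk))).2
          simp [this]
    intro k
    rw [hmin]
    exact hpre _

/-! ### The game -/

abbrev NSet (V : Type u) : Type u := {A : Set V // A.Nonempty}

inductive GEdge {C VT : Type u} (T : Pregraph (Option C) VT) :
    VT ⊕ NSet VT → Option C → VT ⊕ NSet VT → Prop
  | tree {t c t'} : T.Edge t c t' → GEdge T (Sum.inl t) c (Sum.inl t')
  | up {t} {A : NSet VT} : t ∈ A.1 → GEdge T (Sum.inl t) none (Sum.inr A)
  | down {t} {A : NSet VT} : t ∈ A.1 → GEdge T (Sum.inr A) none (Sum.inl t)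

def gameGraph {C VT : Type u} (T : Pregraph (Option C) VT) :
    Pregraph (Option C) (VT ⊕ NSet VT) := ⟨GEdge T⟩

def eveSet (VT : Type u) : Set (VT ⊕ NSet VT) := Set.range Sum.inr

theorem gameGraph_noSinks {C VT : Type u} {T : Pregraph (Option C) VT} (hT : T.NoSinks) :
    (gameGraph T).NoSinks := by
  rintro (t | A)
  · obtain ⟨c, t', h⟩ := hT t
    exact ⟨c, _, GEdge.tree h⟩
  · obtain ⟨t, ht⟩ := A.2
    exact ⟨none, _, GEdge.down ht⟩

/-- The reference strategy of Eve: go back to where Adam came from. -/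
inductive RefEdge {C VT : Type u} (T : Pregraph (Option C) VT) :
    VT ⊕ (Σ A : NSet VT, A.1) → Option C → VT ⊕ (Σ A : NSet VT, A.1) → Prop
  | tree {t c t'} : T.Edge t c t' → RefEdge T (Sum.inl t) c (Sum.inl t')
  | up {A : NSet VT} (t : A.1) : RefEdge T (Sum.inl t.1) none (Sum.inr ⟨A, t⟩)
  | down {A : NSet VT} (t : A.1) : RefEdge T (Sum.inr ⟨A, t⟩) none (Sum.inl t.1)

def refGraph {C VT : Type u} (T : Pregraph (Option C) VT) :
    Pregraph (Option C) (VT ⊕ (Σ A : NSet VT, A.1)) := ⟨RefEdge T⟩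

def refProj {VT : Type u} : VT ⊕ (Σ A : NSet VT, A.1) → VT ⊕ NSet VT
  | Sum.inl t => Sum.inl t
  | Sum.inr p => Sum.inr p.1

def refTree {VT : Type u} : VT ⊕ (Σ A : NSet VT, A.1) → VT
  | Sum.inl t => t
  | Sum.inr p => p.2.1

theorem ref_isStrategy {C VT : Type u} {T : Pregraph (Option C) VT} (hT : T.NoSinks) (t₀ : VT) :
    IsStrategy (gameGraph T) (eveSet VT) (Sum.inl t₀) (refGraph T) refProj (Sum.inl t₀) := by
  refine ⟨?_, ?_, rfl, ?_⟩
  · rintro (t | ⟨A, t⟩)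
    · obtain ⟨c, t', h⟩ := hT t
      exact ⟨c, _, RefEdge.tree h⟩
    · exact ⟨none, _, RefEdge.down t⟩
  · intro v c v' h
    cases h with
    | tree h => exact GEdge.tree h
    | up t => exact GEdge.up t.2
    | down t => exact GEdge.down t.2
  · intro v hv c v' h s hs
    cases h with
    | tree h =>
      rcases s with t | p
      · cases hs
        exact ⟨Sum.inl _, rfl, RefEdge.tree h⟩
      · cases hs
    | @up t A h =>
      rcases s with t | p
      · cases hs
        exact ⟨Sum.inr ⟨A, ⟨_, h⟩⟩, rfl, RefEdge.up (A := A) ⟨_, h⟩⟩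
      · cases hs
    | down h => exact absurd ⟨_, rfl⟩ hv

theorem gameValue_le {C VT : Type u} {X : Type v} [CompleteLinearOrder X]
    (val : (ℕ → C) → X) {T : Pregraph (Option C) VT} (hT : T.NoSinks) (t₀ : VT) :
    gameValue (gameGraph T) (eveSet VT) (Sum.inl t₀) (epsExtension val) ≤
      T.valueAt (epsExtension val) t₀ := by
  have hle : gameValue (gameGraph T) (eveSet VT) (Sum.inl t₀) (epsExtension val) ≤
      (refGraph T).valueAt (epsExtension val) (Sum.inl t₀) :=
    sInf_le ⟨_, _, _, _, ref_isStrategy hT t₀, rfl⟩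
  refine hle.trans ?_
  apply sSup_le
  rintro _ ⟨π, γ, h0, hπ, rfl⟩
  have hst : ∀ i, T.Edge (refTree (π i)) (γ i) (refTree (π (i + 1))) ∨
      (refTree (π (i + 1)) = refTree (π i) ∧ γ i = none) := by
    intro i
    have h : RefEdge T (π i) (γ i) (π (i + 1)) := hπ i
    generalize π i = a at h
    generalize π (i + 1) = b at h
    generalize γ i = c at h
    cases h with
    | tree h => exact Or.inl h
    | up t => exact Or.inr ⟨rfl, rfl⟩
    | down t => exact Or.inr ⟨rfl, rfl⟩
  obtain ⟨π', γ', h0', hπ', hpre⟩ := destutter hT hst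
  refine (epsExtension_le_of_prefix val hpre).trans (le_sSup ⟨π', γ', ?_, hπ', rfl⟩)
  rw [h0', h0]
  rfl

/-! ### Lifting the tree into the strategy -/

theorem listPath_append {C V : Type u} {G : Pregraph C V} {c : C} {t' : V} :
    ∀ (p : List (C × V)) (t : V), G.ListPath t p → G.Edge (Pregraph.pathEnd t p) c t' →
      G.ListPath t (p ++ [(c, t')]) ∧ Pregraph.pathEnd t (p ++ [(c, t')]) = t'
  | [], t, _, he => ⟨⟨he, trivial⟩, rfl⟩
  | e :: p, t, hp, he => by
    have := listPath_append p e.2 hp.2 he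
    exact ⟨⟨hp.1, this.1⟩, this.2⟩

theorem exists_lift {C VT Y : Type u} {T : Pregraph C VT} {t₀ : VT} (hT : T.IsPretree t₀)
    {S : Pregraph C Y} (R : Y → VT → Prop) (s₀ : Y) (h0 : R s₀ t₀)
    (hstep : ∀ s t c t', R s t → T.Edge t c t' → ∃ s', R s' t' ∧ S.Edge s c s') :
    ∃ ψ : VT → Y, ψ t₀ = s₀ ∧ (∀ t, R (ψ t) t) ∧ T.IsMorphism S ψ := by
  classical
  let nxt : Y → C × VT → Y := fun s e =>
    if h : ∃ s', R s' e.2 ∧ S.Edge s e.1 s' then h.choose else s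
  have hnxt : ∀ s t c t', R s t → T.Edge t c t' →
      R (nxt s (c, t')) t' ∧ S.Edge s c (nxt s (c, t')) := by
    intro s t c t' hs he
    have h := hstep s t c t' hs he
    simp only [nxt, dif_pos h]
    exact h.choose_spec
  have hfold : ∀ (p : List (C × VT)) s t, R s t → T.ListPath t p →
      R (p.foldl nxt s) (Pregraph.pathEnd t p) := by
    intro p
    induction p with
    | nil => intro s t hs _; exact hs
    | cons e p ih =>
      intro s t hs hp
      exact ih _ _ (hnxt s t e.1 e.2 hs hp.1).1 hp.2
  choose path hpath huniq using hT
  have hR : ∀ t, R ((path t).foldl nxt s₀) t := by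
    intro t
    have := hfold (path t) s₀ t₀ h0 (hpath t).1
    rwa [(hpath t).2] at this
  refine ⟨fun t => (path t).foldl nxt s₀, ?_, hR, ?_⟩
  · have : [] = path t₀ := huniq t₀ [] ⟨trivial, rfl⟩
    simp [← this]
  · intro t c t' he
    have h1 := listPath_append (path t) t₀ (hpath t).1 (c := c) (t' := t') (by
      rw [(hpath t).2]; exact he)
    have : path t ++ [(c, t')] = path t' := huniq t' _ h1
    simp only [← this, List.foldl_append, List.foldl_cons, List.foldl_nil]
    exact (hnxt _ t c t' (hR t) he).2

/-! ### The core construction -/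

theorem core {C VT : Type u} {X : Type v} [CompleteLinearOrder X]
    (val : (ℕ → C) → X) (T : Pregraph (Option C) VT) (t₀ : VT) (hT : T.IsTree t₀)
    {M : Type u} (D : Set ((VT ⊕ NSet VT) × M)) (S : Pregraph (Option C) ↥D) (s₀ : ↥D)
    (hS : IsEpsStrategy (gameGraph T) (eveSet VT) (Sum.inl t₀) D S s₀)
    (hv : S.valueAt (epsExtension val) s₀ ≤
      gameValue (gameGraph T) (eveSet VT) (Sum.inl t₀) (epsExtension val)) :
    ∃ (VU : Type u) (U : Pregraph (Option C) VU) (part : VU → M),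
        IsEpsSeparated U part ∧ EpsWellFounded U ∧
        (IsChromaticStrat D S → IsChromaticGraph U part) ∧
        ∃ φ : VT → VU, T.IsMorphism U φ ∧
          U.valueAt (epsExtension val) (φ t₀) ≤ T.valueAt (epsExtension val) t₀ := by
  classical
  obtain ⟨⟨hns, hmor, hs0, hadam⟩, hmem⟩ := hS
  -- memory along ε-paths
  have hmemEP : ∀ {n : ℕ} {a b : ↥D} {e : Option C}, EP S n a e b → e = none →
      a.1.2 = b.1.2 := by
    intro n a b e h
    induction h with
    | base h => rintro rfl; exact hmem _ _ h
    | eps h _ ih => intro he; exact (hmem _ _ h).trans (ih he)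
    | col => intro he; cases he
  -- key minimum property
  have key : ∀ (A : Set VT) (m : M), (∃ s : ↥D, ∃ t ∈ A, s.1 = (Sum.inl t, m)) →
      ∃ s' : ↥D, ∃ t' ∈ A, s'.1 = (Sum.inl t', m) ∧
        ∀ s : ↥D, ∀ t ∈ A, s.1 = (Sum.inl t, m) → PP S s none s' := by
    rintro A m ⟨s, t, htA, hs⟩
    let A' : NSet VT := ⟨A, ⟨t, htA⟩⟩
    have hup : ∀ s : ↥D, ∀ t ∈ A, s.1 = (Sum.inl t, m) →
        ∃ r : ↥D, r.1 = (Sum.inr A', m) ∧ S.Edge s none r := by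
      intro s t ht hs
      obtain ⟨r, hr, he⟩ := hadam (Sum.inl t) (by rintro ⟨_, h⟩; cases h) none (Sum.inr A')
        (GEdge.up ht) s (congrArg Prod.fst hs)
      refine ⟨r, ?_, he⟩
      have h2 := hmem _ _ he
      rw [hs] at h2
      exact Prod.ext hr h2.symm
    obtain ⟨r, hr, -⟩ := hup s t htA hs
    obtain ⟨c, s', he⟩ := hns r
    have hg : GEdge T r.1.1 c s'.1.1 := hmor he
    rw [hr] at hg
    obtain ⟨t', ht', hst', hc⟩ : ∃ t' ∈ A, s'.1.1 = Sum.inl t' ∧ c = none := by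
      generalize s'.1.1 = b at hg
      cases hg with
      | down h => exact ⟨_, h, rfl, rfl⟩
    subst hc
    have hm' := hmem _ _ he
    rw [hr] at hm'
    refine ⟨s', t', ht', Prod.ext hst' hm'.symm, ?_⟩
    intro s₁ t₁ ht₁ hs₁
    obtain ⟨r₁, hr₁, he₁⟩ := hup s₁ t₁ ht₁ hs₁
    have : r₁ = r := Subtype.ext (hr₁.trans hr.symm)
    subst this
    exact ⟨_, EP.eps he₁ (EP.base he)⟩
  -- tree states
  let Y : Type u := {s : ↥D // ∃ t, s.1.1 = Sum.inl t}
  have hYrefl : ∀ y : Y, PP S y.1 none y.1 := by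
    rintro ⟨s, t, ht⟩
    obtain ⟨s', t', ht', hs', h⟩ := key {t} s.1.2 ⟨s, t, rfl, Prod.ext ht rfl⟩
    have e : s' = s := by
      apply Subtype.ext
      rw [hs', Set.mem_singleton_iff.1 ht', ← ht]
    have h2 := h s t rfl (Prod.ext ht rfl)
    rwa [e] at h2
  let st : Setoid Y :=
    { r := fun a b => PP S a.1 none b.1 ∧ PP S b.1 none a.1
      iseqv := ⟨fun y => ⟨hYrefl y, hYrefl y⟩, fun h => ⟨h.2, h.1⟩,
        fun h h' => ⟨h.1.eps_left h'.1, h'.2.eps_left h.2⟩⟩ }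
  let U : Pregraph (Option C) (Quotient st) := ⟨fun q c q' => PP S q.out.1 c q'.out.1⟩
  have hanti : ∀ q q' : Quotient st, U.Edge q none q' → U.Edge q' none q → q = q' := by
    intro q q' h h'
    exact Quotient.out_equiv_out.1 ⟨h, h'⟩
  have hfib : ∀ q q' : Quotient st, U.Edge q none q' → q.out.1.1.2 = q'.out.1.1.2 := by
    rintro q q' ⟨n, h⟩
    exact hmemEP h rfl
  have hmin : ∀ s : Set (Quotient st), s.Nonempty → ∀ m, (∀ q ∈ s, q.out.1.1.2 = m) →
      ∃ q ∈ s, ∀ q' ∈ s, U.Edge q' none q := by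
    rintro s ⟨a, ha⟩ m hm
    have hsp : ∀ q ∈ s, ∃ t, q.out.1.1 = (Sum.inl t, m) := by
      intro q hq
      obtain ⟨t, ht⟩ := q.out.2
      exact ⟨t, Prod.ext ht (hm q hq)⟩
    obtain ⟨s', t', ⟨q, hq, hqt⟩, hs', h⟩ :=
      key {t | ∃ q ∈ s, q.out.1.1 = (Sum.inl t, m)} m (by
        obtain ⟨t, ht⟩ := hsp a ha
        exact ⟨a.out.1, t, ⟨a, ha, ht⟩, ht⟩)
    refine ⟨q, hq, fun q' hq' => ?_⟩
    obtain ⟨t, ht⟩ := hsp q' hq'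
    have e : s' = q.out.1 := Subtype.ext (hs'.trans hqt.symm)
    have h3 := h q'.out.1 t ⟨q', hq', ht⟩ ht
    rw [e] at h3
    exact h3
  refine ⟨Quotient st, U, fun q => q.out.1.1.2, ⟨?_, ?_, ?_, ?_, ?_⟩, ?_, ?_, ?_⟩
  · exact fun q => hYrefl _
  · exact fun q q' => hanti q q'
  · intro u v c v' u' h1 h2 h3
    exact PP.eps_left h1 (PP.eps_right h2 h3)
  · exact fun q q' => hfib q q'
  · intro q q' h
    obtain ⟨r, hr, hmr⟩ := hmin {q, q'} ⟨q, by simp⟩ (q.out.1.1.2) (by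
      rintro x (rfl | rfl)
      · rfl
      · exact h.symm)
    rcases hr with rfl | rfl
    · exact Or.inr (hmr _ (by simp))
    · exact Or.inl (hmr _ (by simp))
  · refine WellFounded.wellFounded_iff_has_min.2 ?_
    rintro s ⟨a, ha⟩
    obtain ⟨q, hq, hmq⟩ := hmin {x ∈ s | x.out.1.1.2 = a.out.1.1.2} ⟨a, ha, rfl⟩ _
      (fun q hq => hq.2)
    refine ⟨q, hq.1, ?_⟩
    rintro x hx ⟨h1, h2⟩
    exact h2 (hanti _ _ (hmq x ⟨hx, (hfib _ _ h1).symm.trans hq.2⟩) h1)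
  · rintro ⟨δ, hδ⟩
    refine ⟨fun m c => δ m (some c), ?_⟩
    rintro q c q' ⟨n, h⟩
    have : ∀ {n : ℕ} {a b : ↥D} {e : Option C}, EP S n a e b → e = some c →
        b.1.2 = δ a.1.2 (some c) := by
      intro n a b e h
      induction h with
      | base h => rintro rfl; exact hδ _ _ _ h
      | eps h _ ih => intro he; rw [hmem _ _ h]; exact ih he
      | col h h' _ =>
        intro he
        rw [← hmemEP h' rfl, ← he]
        exact hδ _ _ _ h
    exact this h rfl
  · obtain ⟨ψ, hψ0, hψR, hψ⟩ := exists_lift hT.2 (S := S)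
      (fun (s : ↥D) (t : VT) => s.1.1 = Sum.inl t) s₀ hs0 (by
        intro s t c t' hs he
        exact hadam (Sum.inl t) (by rintro ⟨_, h⟩; cases h) c (Sum.inl t') (GEdge.tree he) s hs)
    let φ : VT → Quotient st := fun t => Quotient.mk st ⟨ψ t, t, hψR t⟩
    have hout : ∀ t, PP S (φ t).out.1 none (ψ t) ∧ PP S (ψ t) none (φ t).out.1 := fun t =>
      Quotient.mk_out (s := st) (⟨ψ t, t, hψR t⟩ : Y)
    refine ⟨φ, ?_, ?_⟩
    · intro t c t' he
      exact PP.eps_left (hout t).1 (PP.eps_right ⟨0, EP.base (hψ he)⟩ (hout t').2)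
    · refine le_trans ?_ (hv.trans (gameValue_le val hT.1 t₀))
      apply sSup_le
      rintro _ ⟨π, γ, h0, hπ, rfl⟩
      let x : ℕ → ↥D := fun i => Nat.casesOn i s₀ (fun j => (π (j + 1)).out.1)
      have hx : ∀ i, PP S (x i) (γ i) (x (i + 1)) := by
        intro i
        cases i with
        | zero =>
          have h1 := (hout t₀).2
          rw [hψ0, ← h0] at h1
          exact PP.eps_left h1 (hπ 0)
        | succ j => exact hπ (j + 1)
      obtain ⟨π', γ', h0', hπ', hpre⟩ := exists_expansion hx
      exact (epsExtension_le_of_prefix val hpre).trans (le_sSup ⟨π', γ', h0', hπ', rfl⟩)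

/-- Structuration of `Cᵋ`-trees. If `val` has ε-memory ≤ μ, then every
`Cᵋ`-tree maps, by a morphism preserving the value at the root, into an ε-separated
well-monotone graph of breadth ≤ μ; moreover if `val` has ε-chromatic memory ≤ μ then
the graph can be taken chromatic. -/
theorem structuration_of_eps_trees
    {C : Type u} {X : Type v} [CompleteLinearOrder X]
    (val : (ℕ → C) → X) (μ : Cardinal.{u})
    (VT : Type u) (T : Pregraph (Option C) VT) (t₀ : VT) (hT : T.IsTree t₀) :
    (HasEpsMemLE val μ →
      ∃ (VU : Type u) (M : Type u) (U : Pregraph (Option C) VU) (part : VU → M),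
        IsEpsSeparated U part ∧ EpsWellFounded U ∧ #M ≤ μ ∧
        ∃ φ : VT → VU, T.IsMorphism U φ ∧
          U.valueAt (epsExtension val) (φ t₀) ≤ T.valueAt (epsExtension val) t₀)
    ∧
    (HasEpsChromMemLE val μ →
      ∃ (VU : Type u) (M : Type u) (U : Pregraph (Option C) VU) (part : VU → M),
        IsEpsSeparated U part ∧ EpsWellFounded U ∧ IsChromaticGraph U part ∧ #M ≤ μ ∧
        ∃ φ : VT → VU, T.IsMorphism U φ ∧
          U.valueAt (epsExtension val) (φ t₀) ≤ T.valueAt (epsExtension val) t₀) := by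
  refine ⟨fun h => ?_, fun h => ?_⟩
  · obtain ⟨M, D, S, s₀, hM, hS, hv⟩ :=
      h _ (gameGraph T) (gameGraph_noSinks hT.1) (eveSet VT) (Sum.inl t₀)
    obtain ⟨VU, U, part, h1, h2, -, h4⟩ := core val T t₀ hT D S s₀ hS hv
    exact ⟨VU, M, U, part, h1, h2, hM, h4⟩
  · obtain ⟨M, D, S, s₀, hM, hS, hc, hv⟩ :=
      h _ (gameGraph T) (gameGraph_noSinks hT.1) (eveSet VT) (Sum.inl t₀)
    obtain ⟨VU, U, part, h1, h2, h3, h4⟩ := core val T t₀ hT D S s₀ hS hv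
    exact ⟨VU, M, U, part, h1, h2, h3 hc, hM, h4⟩
end

section
/- Let W ⊆ C^ω be a topologically closed objective and suppose that the set Res(W) of left quotients of W, ordered by inclusion, is well-founded and has width < μ. Then W has ε-free memory < μ; moreover, if μ is finite, W also has ε-memory < μ. -/
universe u v

open Cardinal

/-- Prepending a finite word to an infinite word. -/
def listAppend {C : Type u} (u : List C) (w : ℕ → C) : ℕ → C :=
  fun n => if h : n < u.length then u.get ⟨n, h⟩ else w (n - u.length)

/-- An objective is prefix-independent when it is invariant under adding/removing
finite prefixes. -/
def PrefixIndependent {C : Type u} (W : Set (ℕ → C)) : Prop :=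
  ∀ (u : List C) (w : ℕ → C), listAppend u w ∈ W ↔ w ∈ W

/-- The prefix of length `k` of an infinite word. -/
def prefixWord {C : Type u} (w : ℕ → C) (k : ℕ) : List C :=
  List.ofFn (fun i : Fin k => w i)

/-- The safety objective associated with a language `L` of finite words. -/
def SafeObj {C : Type u} (L : Set (List C)) : Set (ℕ → C) :=
  {w | ∀ k, prefixWord w k ∉ L}

/-- Topologically closed objectives are exactly the safety objectives. -/
def TopologicallyClosed {C : Type u} (W : Set (ℕ → C)) : Prop :=
  ∃ L : Set (List C), W = SafeObj L

/-- The left quotient `u⁻¹W`. -/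
def leftQuot {C : Type u} (u : List C) (W : Set (ℕ → C)) : Set (ℕ → C) :=
  {w | listAppend u w ∈ W}

/-- The set of left quotients of `W`, ordered by inclusion. -/
def Res {C : Type u} (W : Set (ℕ → C)) : Set (Set (ℕ → C)) :=
  {Q | ∃ u : List C, Q = leftQuot u W}

/-- Prepending one letter to an infinite word. -/
def consSeq {C : Type u} (c : C) (w : ℕ → C) : ℕ → C :=
  fun n => match n with
  | 0 => c
  | n + 1 => w n

/-- One-letter derivative: `wordDeriv A c = {w | c·w ∈ A}`, so that `[uc] = wordDeriv [u] c`. -/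
def wordDeriv {C : Type u} (A : Set (ℕ → C)) (c : C) : Set (ℕ → C) :=
  {w | consSeq c w ∈ A}

/-- `(κ, W)`-universality for an objective: every tree of cardinality < κ maps into `U`
by a morphism preserving the value at the root (if the root satisfies `W`, so does its
image). -/
def IsUniversalObj {C VU : Type u} (κ : Cardinal.{u}) (W : Set (ℕ → C))
    (U : Pregraph C VU) : Prop :=
  ∀ (VT : Type u) (T : Pregraph C VT) (t₀ : VT), T.IsTree t₀ → #VT < κ →
    ∃ φ : VT → VU, T.IsMorphism U φ ∧ (T.VertexSat W t₀ → U.VertexSat W (φ t₀))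

/-- Eve wins a game with objective `W`: there exists a winning strategy. -/
def EveWins {C V : Type u} (G : Pregraph C V) (VEve : Set V) (v₀ : V)
    (W : Set (ℕ → C)) : Prop :=
  ∃ (VS : Type u) (S : Pregraph C VS) (πS : VS → V) (s₀ : VS),
    IsStrategy G VEve v₀ S πS s₀ ∧ S.VertexSat W s₀

/-- An objective has ε-memory ≤ μ: in every ε-game that Eve wins, she has a winning
ε-strategy of memory ≤ μ. -/
def ObjEpsMemLE {C : Type u} (W : Set (ℕ → C)) (μ : Cardinal.{u}) : Prop :=
  ∀ (V : Type u) (G : Pregraph (Option C) V), G.NoSinks → ∀ (VEve : Set V) (v₀ : V),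
    EveWins G VEve v₀ (epsObjective W) →
    ∃ (M : Type u) (D : Set (V × M)) (S : Pregraph (Option C) ↥D) (s₀ : ↥D),
      #M ≤ μ ∧ IsEpsStrategy G VEve v₀ D S s₀ ∧ S.VertexSat (epsObjective W) s₀

/-- An objective has ε-memory < μ: in every ε-game that Eve wins, she has a winning
ε-strategy of memory < μ. -/
def ObjEpsMemLT {C : Type u} (W : Set (ℕ → C)) (μ : Cardinal.{u}) : Prop :=
  ∀ (V : Type u) (G : Pregraph (Option C) V), G.NoSinks → ∀ (VEve : Set V) (v₀ : V),
    EveWins G VEve v₀ (epsObjective W) →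
    ∃ (M : Type u) (D : Set (V × M)) (S : Pregraph (Option C) ↥D) (s₀ : ↥D),
      #M < μ ∧ IsEpsStrategy G VEve v₀ D S s₀ ∧ S.VertexSat (epsObjective W) s₀

/-- An objective has ε-free memory < μ: in every game that Eve wins, she has a winning
strategy all of whose fibres have cardinality < μ. -/
def ObjMemLT {C : Type u} (W : Set (ℕ → C)) (μ : Cardinal.{u}) : Prop :=
  ∀ (V : Type u) (G : Pregraph C V), G.NoSinks → ∀ (VEve : Set V) (v₀ : V),
    EveWins G VEve v₀ W →
    ∃ (VS : Type u) (S : Pregraph C VS) (πS : VS → V) (s₀ : VS),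
      IsStrategy G VEve v₀ S πS s₀ ∧ (∀ v : V, #(↥(πS ⁻¹' {v})) < μ) ∧
      S.VertexSat W s₀

/-! ### Dilworth's theorem -/

theorem dilworth_finset {α : Type u} [PartialOrder α] :
    ∀ (N : ℕ) (s : Finset α), s.card = N → ∀ n : ℕ,
      (∀ A : Finset α, A ⊆ s → IsAntichain (· ≤ ·) (A : Set α) → A.card ≤ n) →
      ∃ f : α → ℕ, (∀ x ∈ s, f x < n) ∧
        ∀ x ∈ s, ∀ y ∈ s, f x = f y → x ≤ y ∨ y ≤ x := by
  classical
  intro N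
  induction N using Nat.strong_induction_on with
  | _ N ih =>
  intro s hs n hn
  rcases s.eq_empty_or_nonempty with rfl | hne
  · exact ⟨fun _ => 0, by simp, by simp⟩
  obtain ⟨a, ha⟩ := s.exists_maximal hne
  have has : a ∈ s := ha.1
  set s' := s.erase a with hs'
  have hcard' : s'.card < N := by
    rw [← hs]; exact Finset.card_erase_lt_of_mem has
  -- a largest antichain of s'
  obtain ⟨A₀, hA₀, hmax⟩ : ∃ A₀ ∈ s'.powerset.filter (fun A : Finset α => IsAntichain (· ≤ ·) (A : Set α)),
      ∀ A ∈ s'.powerset.filter (fun A : Finset α => IsAntichain (· ≤ ·) (A : Set α)), A.card ≤ A₀.card := by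
    apply Finset.exists_max_image _ (fun A : Finset α => A.card)
    exact ⟨∅, by simp⟩
  simp only [Finset.mem_filter, Finset.mem_powerset] at hA₀ hmax
  set k := A₀.card with hk
  have hs's : s' ⊆ s := Finset.erase_subset _ _
  have hkn : k ≤ n := hn A₀ (hA₀.1.trans hs's) hA₀.2
  obtain ⟨f, hf1, hf2⟩ := ih _ hcard' s' rfl k (fun A h1 h2 => hmax A ⟨h1, h2⟩)
  -- every k-antichain hits every chain
  have hit : ∀ A : Finset α, A ⊆ s' → IsAntichain (· ≤ ·) (A : Set α) → A.card = k →
      ∀ i < k, ∃ x ∈ A, f x = i := by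
    intro A hA hanti hc i hi
    have hinj : Set.InjOn f (A : Set α) := by
      intro x hx y hy hxy
      by_contra hne
      rcases hf2 x (hA hx) y (hA hy) hxy with h | h
      · exact hanti hx hy hne h
      · exact hanti hy hx (Ne.symm hne) h
    have himg : A.image f = Finset.range k := by
      apply Finset.eq_of_subset_of_card_le
      · intro j hj
        obtain ⟨x, hx, rfl⟩ := Finset.mem_image.1 hj
        exact Finset.mem_range.2 (hf1 x (hA hx))
      · rw [Finset.card_image_of_injOn hinj, hc, Finset.card_range]
    have : i ∈ A.image f := by rw [himg]; exact Finset.mem_range.2 hi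
    simpa using this
  have hx : ∀ i : ℕ, ∃ x, i < k → (x ∈ s' ∧ f x = i ∧
      (∃ A : Finset α, A ⊆ s' ∧ IsAntichain (· ≤ ·) (A : Set α) ∧ A.card = k ∧ x ∈ A) ∧
      ∀ (A : Finset α) (z : α), A ⊆ s' → IsAntichain (· ≤ ·) (A : Set α) → A.card = k → z ∈ A →
        f z = i → z ≤ x) := by
    intro i
    by_cases hi : i < k
    · let T := s'.filter (fun x => f x = i ∧
        ∃ A : Finset α, A ⊆ s' ∧ IsAntichain (· ≤ ·) (A : Set α) ∧ A.card = k ∧ x ∈ A)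
      have hT : T.Nonempty := by
        obtain ⟨x, hx, hfx⟩ := hit A₀ hA₀.1 hA₀.2 rfl i hi
        exact ⟨x, Finset.mem_filter.2 ⟨hA₀.1 hx, hfx, A₀, hA₀.1, hA₀.2, rfl, hx⟩⟩
      obtain ⟨x, hx⟩ := T.exists_maximal hT
      have hxT := Finset.mem_filter.1 hx.1
      refine ⟨x, fun _ => ⟨hxT.1, hxT.2.1, hxT.2.2, ?_⟩⟩
      intro A z hA hanti hc hz hfz
      rcases hf2 z (hA hz) x hxT.1 (hfz.trans hxT.2.1.symm) with h | h
      · exact h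
      · exact hx.2 (Finset.mem_filter.2 ⟨hA hz, hfz, A, hA, hanti, hc, hz⟩) h
    · exact ⟨a, fun h => absurd h hi⟩
  choose x hx using hx
  have hxinj : ∀ i < k, ∀ j < k, x i = x j → i = j := by
    intro i hi j hj h
    rw [← (hx i hi).2.1, ← (hx j hj).2.1, h]
  have hxanti : ∀ i < k, ∀ j < k, x j ≤ x i → i = j := by
    intro i hi j hj hle
    obtain ⟨A, hA, hanti, hc, hxA⟩ := (hx i hi).2.2.1
    obtain ⟨y, hyA, hfy⟩ := hit A hA hanti hc j hj
    have hyx : y ≤ x j := (hx j hj).2.2.2 A y hA hanti hc hyA hfy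
    have : y = x i := by
      by_contra hne
      exact hanti hyA hxA hne (hyx.trans hle)
    rw [← (hx i hi).2.1, ← this, hfy]
  have hxa : ∀ i < k, ¬ a ≤ x i := by
    intro i hi hle
    have h1 := ha.2 (hs's (hx i hi).1) hle
    have h2 : x i = a := le_antisymm h1 hle
    exact (Finset.mem_erase.1 (hx i hi).1).1 h2
  by_cases hcase : ∃ i < k, x i ≤ a
  · obtain ⟨i, hi, hle⟩ := hcase
    let R := s'.filter (fun z => ¬ (f z = i ∧ z ≤ x i))
    have hRs' : R ⊆ s' := Finset.filter_subset _ _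
    have hRN : R.card < N := lt_of_le_of_lt (Finset.card_le_card hRs') hcard'
    obtain ⟨g, hg1, hg2⟩ := ih _ hRN R rfl (k - 1) (by
      intro A hA hanti
      have h1 := hmax A ⟨hA.trans hRs', hanti⟩
      have h2 : A.card ≠ k := by
        intro hc
        obtain ⟨z, hz, hfz⟩ := hit A (hA.trans hRs') hanti hc i hi
        have h3 := (Finset.mem_filter.1 (hA hz)).2
        exact h3 ⟨hfz, (hx i hi).2.2.2 A z (hA.trans hRs') hanti hc hz hfz⟩
      omega)
    have hK : ∀ z ∈ s, z ∉ R → z = a ∨ (z ∈ s' ∧ f z = i ∧ z ≤ x i) := by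
      intro z hz hzR
      by_cases hza : z = a
      · exact Or.inl hza
      · right
        have hzs' : z ∈ s' := Finset.mem_erase.2 ⟨hza, hz⟩
        by_contra hcon
        exact hzR (Finset.mem_filter.2 ⟨hzs', fun h => hcon ⟨hzs', h⟩⟩)
    refine ⟨fun z => if z ∈ R then g z else k - 1, ?_, ?_⟩
    · intro z hz
      by_cases hzR : z ∈ R
      · have := hg1 z hzR
        simp only [hzR, if_true]; omega
      · simp only [hzR, if_false]; omega
    · intro y hy z hz hyz
      by_cases hyR : y ∈ R <;> by_cases hzR : z ∈ R
      · simp only [hyR, hzR, if_true] at hyz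
        exact hg2 y hyR z hzR hyz
      · simp only [hyR, hzR, if_true, if_false] at hyz
        have := hg1 y hyR; omega
      · simp only [hyR, hzR, if_true, if_false] at hyz
        have := hg1 z hzR; omega
      · rcases hK y hy hyR with rfl | ⟨h1, h2, h3⟩ <;> rcases hK z hz hzR with h | ⟨h4, h5, h6⟩
        · exact Or.inl h.ge
        · exact Or.inr (h6.trans hle)
        · exact Or.inl (h ▸ h3.trans hle)
        · exact hf2 y h1 z h4 (h2.trans h5.symm)
  · push Not at hcase
    have hkn' : k + 1 ≤ n := by
      let X := (Finset.range k).image x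
      have hXc : X.card = k := by
        rw [Finset.card_image_of_injOn, Finset.card_range]
        intro i hi j hj h
        exact hxinj i (by simpa using hi) j (by simpa using hj) h
      have hXs' : X ⊆ s' := by
        intro y hy
        obtain ⟨i, hi, rfl⟩ := Finset.mem_image.1 hy
        exact (hx i (Finset.mem_range.1 hi)).1
      have haX : a ∉ X := fun h => (Finset.mem_erase.1 (hXs' h)).1 rfl
      rw [← hXc, ← Finset.card_insert_of_notMem haX]
      apply hn
      · exact Finset.insert_subset has (hXs'.trans hs's)
      · intro y hy z hz hne hle
        rw [Finset.mem_coe, Finset.mem_insert] at hy hz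
        rcases hy with rfl | hy <;> rcases hz with rfl | hz
        · exact hne rfl
        · obtain ⟨i, hi, rfl⟩ := Finset.mem_image.1 hz
          exact hxa i (Finset.mem_range.1 hi) hle
        · obtain ⟨i, hi, rfl⟩ := Finset.mem_image.1 hy
          exact hcase i (Finset.mem_range.1 hi) hle
        · obtain ⟨i, hi, rfl⟩ := Finset.mem_image.1 hy
          obtain ⟨j, hj, rfl⟩ := Finset.mem_image.1 hz
          exact hne (congrArg x (hxanti j (Finset.mem_range.1 hj) i (Finset.mem_range.1 hi) hle).symm)
    have hmem : ∀ z ∈ s, z ≠ a → z ∈ s' := fun z hz h => Finset.mem_erase.2 ⟨h, hz⟩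
    refine ⟨fun z => if z = a then k else f z, ?_, ?_⟩
    · intro z hz
      by_cases hza : z = a
      · simp only [hza, if_true]; omega
      · have := hf1 z (hmem z hz hza)
        simp only [hza, if_false]; omega
    · intro y hy z hz hyz
      by_cases hya : y = a <;> by_cases hza : z = a
      · exact Or.inl (hya.trans hza.symm).le
      · have := hf1 z (hmem z hz hza)
        simp only [hya, hza, if_true, if_false] at hyz; omega
      · have := hf1 y (hmem y hy hya)
        simp only [hya, hza, if_true, if_false] at hyz; omega
      · simp only [hya, hza, if_false] at hyz
        exact hf2 y (hmem y hy hya) z (hmem z hz hza) hyz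

theorem dilworth_infinite {α : Type u} [PartialOrder α] (n : ℕ) (hn0 : 0 < n)
    (hn : ∀ A : Finset α, IsAntichain (· ≤ ·) (A : Set α) → A.card ≤ n) :
    ∃ f : α → Fin n, ∀ x y, f x = f y → x ≤ y ∨ y ≤ x := by
  classical
  have h : ∀ s : Finset α, ∃ g : α → Fin n, ∀ x ∈ s, ∀ y ∈ s, g x = g y → x ≤ y ∨ y ≤ x := by
    intro s
    obtain ⟨f, h1, h2⟩ := dilworth_finset _ s rfl n (fun A _ hA => hn A hA)
    refine ⟨fun x => ⟨f x % n, Nat.mod_lt _ hn0⟩, ?_⟩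
    intro x hx y hy hxy
    apply h2 x hx y hy
    have := Fin.mk.inj_iff.1 hxy
    rwa [Nat.mod_eq_of_lt (h1 x hx), Nat.mod_eq_of_lt (h1 y hy)] at this
  choose g hg using h
  obtain ⟨f, hf⟩ := Finset.rado_selection (β := fun _ : α => Fin n) g
  refine ⟨f, fun x y hxy => ?_⟩
  obtain ⟨t, ht, hft⟩ := hf {x, y}
  have hx : x ∈ ({x, y} : Finset α) := by simp
  have hy : y ∈ ({x, y} : Finset α) := by simp
  apply hg t x (ht hx) y (ht hy)
  rw [← hft x hx, ← hft y hy, hxy]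

/-! ### Words -/

/-- Quotient by one letter or by ε. -/
def stepQuot {C : Type u} (Q : Set (ℕ → C)) : Option C → Set (ℕ → C)
  | none => Q
  | some c => wordDeriv Q c

theorem stepQuot_mono {C : Type u} {Q Q' : Set (ℕ → C)} (h : Q ⊆ Q') (c : Option C) :
    stepQuot Q c ⊆ stepQuot Q' c := by
  cases c with
  | none => exact h
  | some c => exact fun w hw => h hw

theorem listAppend_snoc {C : Type u} (l : List C) (c : C) (w : ℕ → C) :
    listAppend (l ++ [c]) w = listAppend l (consSeq c w) := by
  funext n
  unfold listAppend
  rcases lt_trichotomy n l.length with h | h | h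
  · have h' : n < (l ++ [c]).length := by simp; omega
    simp only [h, h', dif_pos, List.get_eq_getElem]
    exact List.getElem_append_left h
  · subst h
    simp [consSeq]
  · have h' : ¬ n < (l ++ [c]).length := by simp; omega
    have h'' : ¬ n < l.length := by omega
    obtain ⟨m, rfl⟩ : ∃ m, n = l.length + 1 + m := ⟨n - (l.length + 1), by omega⟩
    have e1 : l.length + 1 + m - l.length = m + 1 := by omega
    have e2 : l.length + 1 + m - (l ++ [c]).length = m := by simp
    rw [dif_neg h', dif_neg h'', e1, e2]
    rfl

theorem wordDeriv_leftQuot {C : Type u} (l : List C) (c : C) (W : Set (ℕ → C)) :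
    wordDeriv (leftQuot l W) c = leftQuot (l ++ [c]) W := by
  ext w
  simp only [wordDeriv, leftQuot, Set.mem_ofPred_eq, listAppend_snoc]

theorem leftQuot_nil {C : Type u} (W : Set (ℕ → C)) : leftQuot [] W = W := by
  ext w
  have : listAppend [] w = w := by funext n; simp [listAppend]
  simp only [leftQuot, Set.mem_ofPred_eq, this]

theorem wordDeriv_mem_Res {C : Type u} {W Q : Set (ℕ → C)} (h : Q ∈ Res W) (c : C) :
    wordDeriv Q c ∈ Res W := by
  obtain ⟨l, rfl⟩ := h
  exact ⟨l ++ [c], wordDeriv_leftQuot l c W⟩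

theorem stepQuot_mem_Res {C : Type u} {W Q : Set (ℕ → C)} (h : Q ∈ Res W) (c : Option C) :
    stepQuot Q c ∈ Res W := by
  cases c with
  | none => exact h
  | some c => exact wordDeriv_mem_Res h c

theorem mem_of_closed {C : Type u} {W : Set (ℕ → C)} (hW : TopologicallyClosed W) (w : ℕ → C)
    (h : ∀ k, ∃ w' ∈ W, ∀ i < k, w' i = w i) : w ∈ W := by
  obtain ⟨L, rfl⟩ := hW
  intro k hk
  obtain ⟨w', hw', heq⟩ := h k
  apply hw' k
  have : prefixWord w' k = prefixWord w k := by
    unfold prefixWord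
    congr 1
    funext i
    exact heq i i.2
  rwa [this]

theorem listAppend_lt {C : Type u} (l : List C) (w : ℕ → C) (n : ℕ) (h : n < l.length) :
    listAppend l w n = l[n] := by
  simp [listAppend, h]

theorem filterMap_range_prefix {C : Type u} (γ : ℕ → Option C) {j k : ℕ} (h : j ≤ k) :
    (List.range j).filterMap γ <+: (List.range k).filterMap γ := by
  induction k, h using Nat.le_induction with
  | base => exact List.prefix_rfl
  | succ k _ ih =>
    rw [filterMap_range_succ]
    exact ih.trans (List.prefix_append _ _)

theorem filterMap_range_agree {C : Type u} (γ : ℕ → Option C) (j k n : ℕ)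
    (hj : n < ((List.range j).filterMap γ).length) (hk : n < ((List.range k).filterMap γ).length) :
    ((List.range j).filterMap γ)[n] = ((List.range k).filterMap γ)[n] := by
  rcases le_total j k with h | h
  · exact (filterMap_range_prefix γ h).getElem hj
  · exact ((filterMap_range_prefix γ h).getElem hk).symm

theorem eps_of_chain {C : Type u} {W : Set (ℕ → C)} (hW : TopologicallyClosed W)
    (γ : ℕ → Option C) (Q : ℕ → Set (ℕ → C)) (h0 : Q 0 ⊆ W)
    (hstep : ∀ i, Q (i + 1) ⊆ stepQuot (Q i) (γ i)) (hne : ∀ i, (Q i).Nonempty) :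
    γ ∈ epsObjective W := by
  have hQ : ∀ k, Q k ⊆ leftQuot ((List.range k).filterMap γ) W := by
    intro k
    induction k with
    | zero => simpa [leftQuot_nil] using h0
    | succ k ih =>
      refine (hstep k).trans ((stepQuot_mono ih _).trans ?_)
      rw [filterMap_range_succ]
      cases h : γ k with
      | none => simp [stepQuot]
      | some c => simp [stepQuot, wordDeriv_leftQuot]
  choose w hw using hne
  have hin : ∀ k, listAppend ((List.range k).filterMap γ) (w k) ∈ W := fun k => hQ k (hw k)
  by_cases hb : ∀ n, ∃ k, n < ((List.range k).filterMap γ).length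
  · choose k hk using hb
    have hagree : ∀ j n (h : n < ((List.range j).filterMap γ).length),
        ((List.range j).filterMap γ)[n] = ((List.range (k n)).filterMap γ)[n]'(hk n) :=
      fun j n h => filterMap_range_agree γ j (k n) n h (hk n)
    refine ⟨fun n => ((List.range (k n)).filterMap γ)[n]'(hk n), ?_, ?_⟩
    · intro j n h
      exact hagree j n h
    · apply mem_of_closed hW
      intro N
      refine ⟨_, hin (k N), fun i hi => ?_⟩
      have hlt : i < ((List.range (k N)).filterMap γ).length := hi.trans (hk N)
      rw [listAppend_lt _ _ _ hlt]
      exact hagree _ _ hlt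
  · push Not at hb
    obtain ⟨n, hn⟩ := hb
    obtain ⟨K, hK⟩ : ∃ K, ∀ k, ((List.range k).filterMap γ).length ≤
        ((List.range K).filterMap γ).length := by
      have hfin : (Set.range fun k => ((List.range k).filterMap γ).length).Finite :=
        (Set.finite_Iic n).subset (by rintro _ ⟨k, rfl⟩; exact hn k)
      obtain ⟨_, ⟨K, rfl⟩, hK⟩ := Set.exists_max_image _ id hfin ⟨_, 0, rfl⟩
      exact ⟨K, fun k => hK _ ⟨k, rfl⟩⟩
    refine ⟨_, ?_, hin K⟩
    intro k m hm
    have hm' := lt_of_lt_of_le hm (hK k)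
    rw [listAppend_lt _ _ _ hm']
    exact filterMap_range_agree γ k K m hm hm'

theorem filterMap_some_comp {C : Type u} (γ : ℕ → C) (k : ℕ) :
    (List.range k).filterMap (fun i => some (γ i)) = (List.range k).map γ := by
  induction k with
  | zero => rfl
  | succ k ih => rw [filterMap_range_succ, ih, List.range_succ]; simp

theorem mem_of_eps_some {C : Type u} {W : Set (ℕ → C)} (γ : ℕ → C)
    (h : (fun i => some (γ i)) ∈ epsObjective W) : γ ∈ W := by
  obtain ⟨w', hc, hw'⟩ := h
  have : w' = γ := by
    funext n
    have h1 := hc (n + 1) n (by rw [filterMap_some_comp]; simp)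
    rw [← h1]
    simp [filterMap_some_comp]
  rwa [← this]

theorem filterMap_cons_range {C : Type u} (c : Option C) (γ : ℕ → Option C) (k : ℕ) :
    (List.range (k + 1)).filterMap (consSeq c γ) = c.toList ++ (List.range k).filterMap γ := by
  rw [List.range_succ_eq_map, List.filterMap_cons, List.filterMap_map]
  have : (consSeq c γ ∘ Nat.succ) = γ := rfl
  rw [this]
  cases c <;> simp [consSeq]

theorem eps_shift {C : Type u} {Q : Set (ℕ → C)} (c : Option C) (γ : ℕ → Option C)
    (h : consSeq c γ ∈ epsObjective Q) : γ ∈ epsObjective (stepQuot Q c) := by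
  obtain ⟨w', hc, hw'⟩ := h
  cases c with
  | none =>
    refine ⟨w', ?_, hw'⟩
    intro k n hn
    have e : (List.range (k + 1)).filterMap (consSeq none γ) = (List.range k).filterMap γ := by
      rw [filterMap_cons_range]; simp
    have h1 := hc (k + 1) n (by rw [e]; exact hn)
    rw [← h1]
    simp [e]
  | some c =>
    have e : ∀ k, (List.range (k + 1)).filterMap (consSeq (some c) γ) =
        c :: (List.range k).filterMap γ := by
      intro k; rw [filterMap_cons_range]; simp
    have h0 : w' 0 = c := by
      have h1 := hc 1 0 (by rw [e 0]; simp)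
      rw [← h1]; simp [consSeq]
    refine ⟨fun n => w' (n + 1), ?_, ?_⟩
    · intro k n hn
      have h1 := hc (k + 1) (n + 1) (by rw [e]; simpa using hn)
      change _ = w' (n + 1)
      rw [← h1]
      simp [e]
    · change consSeq c (fun n => w' (n + 1)) ∈ Q
      have : consSeq c (fun n => w' (n + 1)) = w' := by
        funext n
        cases n with
        | zero => exact h0.symm
        | succ n => rfl
      rwa [this]

theorem vertexSat_nonempty {C V : Type u} {G : Pregraph C V} (hG : G.NoSinks) (v : V)
    (W : Set (ℕ → C)) (h : G.VertexSat W v) : W.Nonempty := by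
  obtain ⟨π, γ, h0, hp⟩ := exists_infPath hG v
  exact ⟨γ, h π γ h0 hp⟩

theorem infPath_cons {C V : Type u} {G : Pregraph C V} {v v' : V} {c : C} (he : G.Edge v c v')
    {π : ℕ → V} {γ : ℕ → C} (h0 : π 0 = v') (hp : G.InfPath π γ) :
    G.InfPath (consSeq v π) (consSeq c γ) := by
  intro i
  cases i with
  | zero => change G.Edge v c (π 0); rwa [h0]
  | succ i => exact hp i

theorem vertexSat_shift {C V : Type u} {G : Pregraph C V} {v v' : V} {c : C}
    (he : G.Edge v c v') {W : Set (ℕ → C)} (h : G.VertexSat W v) :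
    G.VertexSat (wordDeriv W c) v' :=
  fun _ _ h0 hp => h _ _ rfl (infPath_cons he h0 hp)

theorem vertexSat_eps_shift {C V : Type u} {G : Pregraph (Option C) V} {v v' : V} {c : Option C}
    (he : G.Edge v c v') {W : Set (ℕ → C)} (h : G.VertexSat (epsObjective W) v) :
    G.VertexSat (epsObjective (stepQuot W c)) v' :=
  fun _ _ h0 hp => eps_shift c _ (vertexSat_shift he h _ _ h0 hp)

section Win

variable {C V : Type u} {G : Pregraph C V} {VEve : Set V} {v : V}

theorem EveWins.exists_edge {W : Set (ℕ → C)} (h : EveWins G VEve v W) :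
    ∃ c v', G.Edge v c v' ∧ EveWins G VEve v' (wordDeriv W c) := by
  obtain ⟨VS, S, p, s, ⟨h1, h2, h3, h4⟩, hW⟩ := h
  obtain ⟨c, s', he⟩ := h1 s
  exact ⟨c, p s', h3 ▸ h2 he, VS, S, p, s', ⟨h1, h2, rfl, h4⟩, vertexSat_shift he hW⟩

theorem EveWins.adam {W : Set (ℕ → C)} (h : EveWins G VEve v W) (hv : v ∉ VEve) {c : C} {v' : V}
    (hE : G.Edge v c v') : EveWins G VEve v' (wordDeriv W c) := by
  obtain ⟨VS, S, p, s, ⟨h1, h2, h3, h4⟩, hW⟩ := h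
  obtain ⟨s', hs', he⟩ := h4 v hv c v' hE s h3
  exact ⟨VS, S, p, s', ⟨h1, h2, hs', h4⟩, vertexSat_shift he hW⟩

theorem EveWins.nonempty {W : Set (ℕ → C)} (h : EveWins G VEve v W) : W.Nonempty := by
  obtain ⟨VS, S, p, s, ⟨h1, -, -, -⟩, hW⟩ := h
  exact vertexSat_nonempty h1 s W hW

theorem EveWins.mono {W W' : Set (ℕ → C)} (h : EveWins G VEve v W) (hWW : W ⊆ W') :
    EveWins G VEve v W' := by
  obtain ⟨VS, S, p, s, hs, hW⟩ := h
  exact ⟨VS, S, p, s, hs, fun π γ h0 hp => hWW (hW π γ h0 hp)⟩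

end Win

theorem memLT_of_closed {C : Type u} (W : Set (ℕ → C)) (μ : Cardinal.{u})
    (hclosed : TopologicallyClosed W)
    (hwf : WellFounded (fun A B : ↥(Res W) => (A : Set (ℕ → C)) ⊂ (B : Set (ℕ → C))))
    (hwidth : ∀ S : Set ↥(Res W),
      IsAntichain (fun A B : ↥(Res W) => (A : Set (ℕ → C)) ⊆ (B : Set (ℕ → C))) S →
      #(↥S) < μ) : ObjMemLT W μ := by
  intro V G _ VEve v₀ hwin
  let Win : V → Set ↥(Res W) := fun v => {Q | EveWins G VEve v (Q : Set (ℕ → C))}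
  let Min : V → Set ↥(Res W) := fun v =>
    {Q | Q ∈ Win v ∧ ∀ Q' ∈ Win v, ¬ (Q' : Set (ℕ → C)) ⊂ (Q : Set (ℕ → C))}
  have hMin : ∀ v (Q : Set (ℕ → C)), Q ∈ Res W → EveWins G VEve v Q →
      ∃ Q' ∈ Min v, (Q' : Set (ℕ → C)) ⊆ Q := by
    intro v Q hQ hw
    obtain ⟨m, ⟨hm1, hm2⟩, hm3⟩ := hwf.has_min
      {Q' | Q' ∈ Win v ∧ (Q' : Set (ℕ → C)) ⊆ Q} ⟨⟨Q, hQ⟩, hw, subset_rfl⟩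
    exact ⟨m, ⟨hm1, fun Q' h h' => hm3 Q' ⟨h, h'.subset.trans hm2⟩ h'⟩, hm2⟩
  obtain ⟨Q₀, hQ₀, hQ₀W⟩ := hMin v₀ W ⟨[], (leftQuot_nil W).symm⟩ hwin
  let VS : Type u := {p : V × ↥(Res W) // p.2 ∈ Min p.1}
  let S : Pregraph C VS := ⟨fun p c p' => G.Edge p.1.1 c p'.1.1 ∧
    (p'.1.2 : Set (ℕ → C)) ⊆ wordDeriv (p.1.2 : Set (ℕ → C)) c⟩
  refine ⟨VS, S, fun p => p.1.1, ⟨(v₀, Q₀), hQ₀⟩, ⟨?_, ?_, rfl, ?_⟩, ?_, ?_⟩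
  · rintro ⟨⟨v, Q⟩, hQ⟩
    obtain ⟨c, v', hE, hw⟩ := EveWins.exists_edge hQ.1
    obtain ⟨Q', hQ', hsub⟩ := hMin v' _ (wordDeriv_mem_Res Q.2 c) hw
    exact ⟨c, ⟨(v', Q'), hQ'⟩, hE, hsub⟩
  · intro p c p' h
    exact h.1
  · rintro v hv c v' hE ⟨⟨v1, Q⟩, hQ⟩ rfl
    have hw := EveWins.adam hQ.1 hv hE
    obtain ⟨Q', hQ', hsub⟩ := hMin v' _ (wordDeriv_mem_Res Q.2 c) hw
    exact ⟨⟨(v', Q'), hQ'⟩, rfl, hE, hsub⟩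
  · intro v
    have hanti : IsAntichain (fun A B : ↥(Res W) => (A : Set (ℕ → C)) ⊆ (B : Set (ℕ → C)))
        (Min v) := by
      intro A hA B hB hne hsub
      refine hB.2 A hA.1 (LE.le.ssubset_of_ne hsub fun h => hne (Subtype.ext h))
    refine lt_of_le_of_lt ?_ (hwidth _ hanti)
    refine Cardinal.mk_le_of_injective (f := fun p => ⟨p.1.1.2, ?_⟩) ?_
    · have h1 := p.1.2
      have h2 : p.1.1.1 = v := p.2
      rwa [h2] at h1
    · rintro ⟨⟨⟨v1, Q1⟩, h1⟩, h1'⟩ ⟨⟨⟨v2, Q2⟩, h2⟩, h2'⟩ h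
      have e1 : v1 = v := h1'
      have e2 : v2 = v := h2'
      have e3 : Q1 = Q2 := congrArg Subtype.val h
      subst e1 e2 e3
      rfl
  · intro π γ h0 hp
    apply mem_of_eps_some
    apply eps_of_chain hclosed _ (fun i => ((π i).1.2 : Set (ℕ → C)))
    · rw [h0]; exact hQ₀W
    · intro i; exact (hp i).2
    · intro i; exact EveWins.nonempty (π i).2.1

section EpsWin

variable {C V : Type u} {G : Pregraph (Option C) V} {VEve : Set V} {v : V}

theorem epsWins_exists_edge {W : Set (ℕ → C)} (h : EveWins G VEve v (epsObjective W)) :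
    ∃ c v', G.Edge v c v' ∧ EveWins G VEve v' (epsObjective (stepQuot W c)) := by
  obtain ⟨c, v', hE, hw⟩ := h.exists_edge
  exact ⟨c, v', hE, hw.mono fun γ hγ => eps_shift c γ hγ⟩

theorem epsWins_adam {W : Set (ℕ → C)} (h : EveWins G VEve v (epsObjective W)) (hv : v ∉ VEve)
    {c : Option C} {v' : V} (hE : G.Edge v c v') :
    EveWins G VEve v' (epsObjective (stepQuot W c)) :=
  (h.adam hv hE).mono fun γ hγ => eps_shift c γ hγ

theorem epsWins_nonempty {W : Set (ℕ → C)} (h : EveWins G VEve v (epsObjective W)) :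
    W.Nonempty := by
  obtain ⟨_, w', _, hw'⟩ := h.nonempty
  exact ⟨w', hw'⟩

end EpsWin

theorem epsMemLT_of_closed {C : Type u} (W : Set (ℕ → C)) (μ : Cardinal.{u})
    (hclosed : TopologicallyClosed W)
    (hwf : WellFounded (fun A B : ↥(Res W) => (A : Set (ℕ → C)) ⊂ (B : Set (ℕ → C))))
    (hwidth : ∀ S : Set ↥(Res W),
      IsAntichain (fun A B : ↥(Res W) => (A : Set (ℕ → C)) ⊆ (B : Set (ℕ → C))) S →
      #(↥S) < μ) (hμ : μ < ℵ₀) : ObjEpsMemLT W μ := by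
  have hWRes : W ∈ Res W := ⟨[], (leftQuot_nil W).symm⟩
  obtain ⟨m, rfl⟩ := Cardinal.lt_aleph0.1 hμ
  have hm : 1 < m := by
    have h := hwidth {⟨W, hWRes⟩} (by
      intro A hA B hB hne
      exact absurd ((hA : A = _).trans (hB : B = _).symm) hne)
    rw [Cardinal.mk_singleton] at h
    exact_mod_cast h
  obtain ⟨f, hf⟩ := dilworth_infinite (α := ↥(Res W)) (m - 1) (by omega) (by
    intro A hA
    have h := hwidth (A : Set ↥(Res W)) hA
    have h2 : A.card < m := by
      have h3 : #(↥(A : Set ↥(Res W))) = (A.card : Cardinal.{u}) := Cardinal.mk_coe_finset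
      rw [h3] at h
      exact_mod_cast h
    omega)
  intro V G _ VEve v₀ hwin
  let M : Type u := ULift.{u} (Fin (m - 1))
  let Win : V → M → Set ↥(Res W) := fun v i =>
    {Q | f Q = i.down ∧ EveWins G VEve v (epsObjective (Q : Set (ℕ → C)))}
  have hq : ∀ p : V × M, ∃ Q, (Win p.1 p.2).Nonempty → Q ∈ Win p.1 p.2 ∧
      ∀ Q' ∈ Win p.1 p.2, (Q : Set (ℕ → C)) ⊆ (Q' : Set (ℕ → C)) := by
    intro p
    by_cases hne : (Win p.1 p.2).Nonempty
    · obtain ⟨Q, hQ, hmin⟩ := hwf.has_min _ hne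
      refine ⟨Q, fun _ => ⟨hQ, fun Q' hQ' => ?_⟩⟩
      rcases hf Q Q' (hQ.1.trans hQ'.1.symm) with h | h
      · exact h
      · by_contra hcon
        exact hmin Q' hQ' ⟨h, hcon⟩
    · exact ⟨⟨W, hWRes⟩, fun h => absurd h hne⟩
  choose q hq using hq
  let D : Set (V × M) := {p | (Win p.1 p.2).Nonempty}
  have hto : ∀ v (Q : Set (ℕ → C)) (hQ : Q ∈ Res W), EveWins G VEve v (epsObjective Q) →
      (v, (⟨f ⟨Q, hQ⟩⟩ : M)) ∈ D ∧ (q (v, ⟨f ⟨Q, hQ⟩⟩) : Set (ℕ → C)) ⊆ Q := by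
    intro v Q hQ hw
    have hmem : (⟨Q, hQ⟩ : ↥(Res W)) ∈ Win v ⟨f ⟨Q, hQ⟩⟩ := ⟨rfl, hw⟩
    exact ⟨⟨_, hmem⟩, (hq (v, ⟨f ⟨Q, hQ⟩⟩) ⟨_, hmem⟩).2 _ hmem⟩
  let S : Pregraph (Option C) ↥D := ⟨fun p c p' => G.Edge p.1.1 c p'.1.1 ∧
    (q p'.1 : Set (ℕ → C)) ⊆ stepQuot (q p.1 : Set (ℕ → C)) c ∧ (c = none → p.1.2 = p'.1.2)⟩
  have hmove : ∀ (p : ↥D) (c : Option C) (v' : V), G.Edge p.1.1 c v' →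
      EveWins G VEve v' (epsObjective (stepQuot (q p.1 : Set (ℕ → C)) c)) →
      ∃ p' : ↥D, p'.1.1 = v' ∧ S.Edge p c p' := by
    intro p c v' hE hw
    have hp := (hq p.1 p.2).1
    obtain ⟨h1, h2⟩ := hto v' _ (stepQuot_mem_Res (q p.1).2 c) hw
    refine ⟨⟨_, h1⟩, rfl, hE, h2, ?_⟩
    rintro rfl
    exact ULift.ext _ _ hp.1.symm
  obtain ⟨h1, h2⟩ := hto v₀ W hWRes hwin
  refine ⟨M, D, S, ⟨_, h1⟩, ?_, ⟨⟨?_, ?_, rfl, ?_⟩, ?_⟩, ?_⟩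
  · simp only [M, Cardinal.mk_uLift, Cardinal.mk_fin, Cardinal.lift_natCast]
    exact_mod_cast (by omega : m - 1 < m)
  · intro p
    obtain ⟨c, v', hE, hw⟩ := epsWins_exists_edge (hq p.1 p.2).1.2
    obtain ⟨p', _, hp'⟩ := hmove p c v' hE hw
    exact ⟨c, p', hp'⟩
  · intro p c p' h
    exact h.1
  · rintro v hv c v' hE p rfl
    exact hmove p c v' hE (epsWins_adam (hq p.1 p.2).1.2 hv hE)
  · intro p p' h
    exact h.2.2 rfl
  · intro π γ h0 hp
    apply eps_of_chain hclosed _ (fun i => (q (π i).1 : Set (ℕ → C)))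
    · rw [h0]; exact h2
    · intro i; exact (hp i).2.1
    · intro i; exact epsWins_nonempty (hq (π i).1 (π i).2).1.2

/-- A topologically closed objective whose left quotients form a
well-founded order of width < μ has ε-free memory < μ; if moreover μ is finite, it has
ε-memory < μ. -/
theorem closed_objective_memory
    {C : Type u} (W : Set (ℕ → C)) (μ : Cardinal.{u})
    (hclosed : TopologicallyClosed W)
    (hwf : WellFounded (fun A B : ↥(Res W) => (A : Set (ℕ → C)) ⊂ (B : Set (ℕ → C))))
    (hwidth : ∀ S : Set ↥(Res W),
      IsAntichain (fun A B : ↥(Res W) => (A : Set (ℕ → C)) ⊆ (B : Set (ℕ → C))) S →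
      #(↥S) < μ) :
    ObjMemLT W μ ∧ (μ < ℵ₀ → ObjEpsMemLT W μ) := by
  exact ⟨memLT_of_closed W μ hclosed hwf hwidth,
    fun hμ => epsMemLT_of_closed W μ hclosed hwf hwidth hμ⟩
end

section
/- Let 𝔽 be a Muller objective over a finite set of colours C and let κ be a cardinal. Then there exists a well-monotone C-graph of width ≤ mem(𝔽) which is (κ, Muller(𝔽))-universal for prefix-independent objectives, i.e., it satisfies Muller(𝔽) and every C-pretree of cardinality < κ satisfying Muller(𝔽) admits a morphism into it. -/
universe u v

open Cardinal

namespace Pregraph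

variable {C V : Type u}

/-- Reachability by a finite path. -/
def Reachable (G : Pregraph C V) (t v : V) : Prop :=
  ∃ p, G.ListPath t p ∧ pathEnd t p = v

/-- Restriction of a pregraph to a set of vertices. -/
def restrict (G : Pregraph C V) (A : Set V) : Pregraph C ↥A :=
  ⟨fun a c a' => G.Edge a c a'⟩

end Pregraph

/-- `(κ, W)`-universality for prefix-independent objectives: the graph satisfies `W`
and embeds all pretrees of cardinality < κ satisfying `W`. -/
def IsUniversalPI {C VU : Type u} (κ : Cardinal.{u}) (W : Set (ℕ → C))
    (U : Pregraph C VU) : Prop :=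
  U.Sat W ∧
  ∀ (VT : Type u) (T : Pregraph C VT) (t₀ : VT), T.IsPretree t₀ → #VT < κ → T.Sat W →
    ∃ φ : VT → VU, T.IsMorphism U φ

/-- Almost `(κ, W)`-universality: the graph satisfies `W` and every pretree of
cardinality < κ satisfying `W` has a vertex whose reachable part embeds. -/
def IsAlmostUniversal {C VU : Type u} (κ : Cardinal.{u}) (W : Set (ℕ → C))
    (U : Pregraph C VU) : Prop :=
  U.Sat W ∧
  ∀ (VT : Type u) (T : Pregraph C VT) (t₀ : VT), T.IsPretree t₀ → #VT < κ → T.Sat W →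
    ∃ (t : VT) (φ : ↥{v | T.Reachable t v} → VU),
      (T.restrict {v | T.Reachable t v}).IsMorphism U φ

/-- The graph `U ⋉ ι`: vertices `VU × ι`, with `c`-edges `(v, λ) →c (v', λ')` whenever
`λ' < λ`, or `λ = λ'` and `v →c v'`. -/
def ltimesGraph {C VU : Type u} (U : Pregraph C VU) (ι : Type u) [LinearOrder ι] :
    Pregraph C (VU × ι) :=
  ⟨fun p c q => q.2 < p.2 ∨ (p.2 = q.2 ∧ U.Edge p.1 c q.1)⟩

/-- The set of colours occurring infinitely often in `w`. -/
noncomputable def infOcc {C : Type u} [Fintype C] (w : ℕ → C) : Finset C := by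
  classical exact Finset.univ.filter (fun c => ∀ N, ∃ n, N ≤ n ∧ w n = c)

/-- The Muller objective associated with a family `F` of (nonempty) subsets of `C`. -/
def MullerObj {C : Type u} [Fintype C] (F : Finset (Finset C)) : Set (ℕ → C) :=
  {w | infOcc w ∈ F}

/-- The supports of the children of the Muller objective `F` restricted to `D`:
the maximal nonempty subsets `D' ⊆ D` with `D' ∉ F` (if `D ∈ F`, positive case),
resp. `D' ∈ F` (if `D ∉ F`, negative case). -/
noncomputable def childSupports {C : Type u} [Fintype C] [DecidableEq C]
    (D : Finset C) (F : Finset (Finset C)) : Finset (Finset C) :=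
  if D ∈ F then
    D.powerset.filter (fun D' => D'.Nonempty ∧ D' ∉ F ∧
      ∀ D'' ∈ D.powerset, D''.Nonempty → D'' ∉ F → D' ⊆ D'' → D' = D'')
  else
    D.powerset.filter (fun D' => D'.Nonempty ∧ D' ∈ F ∧
      ∀ D'' ∈ D.powerset, D''.Nonempty → D'' ∈ F → D' ⊆ D'' → D' = D'')

lemma childSupports_ssubset {C : Type u} [Fintype C] [DecidableEq C]
    {D D' : Finset C} {F : Finset (Finset C)}
    (h : D' ∈ childSupports D F) : D' ⊂ D := by
  classical
  unfold childSupports at h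
  by_cases hD : D ∈ F
  · rw [if_pos hD, Finset.mem_filter, Finset.mem_powerset] at h
    exact lt_of_le_of_ne h.1 (by rintro rfl; exact h.2.2.1 hD)
  · rw [if_neg hD, Finset.mem_filter, Finset.mem_powerset] at h
    exact lt_of_le_of_ne h.1 (by rintro rfl; exact hD h.2.2.1)

/-- The memory `mem(F)` of a Muller objective, computed recursively on the Zielonka
tree: 1 for basic objectives, sums over children for positive objectives, maxima over
children for negative ones. -/
noncomputable def memMuller {C : Type u} [Fintype C] [DecidableEq C]
    (D : Finset C) (F : Finset (Finset C)) : ℕ :=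
  if childSupports D F = ∅ then 1
  else if D ∈ F then
    ∑ D' ∈ (childSupports D F).attach, memMuller D'.1 (F.filter (· ⊆ D'.1))
  else
    (childSupports D F).attach.sup (fun D' => memMuller D'.1 (F.filter (· ⊆ D'.1)))
termination_by D.card
decreasing_by
  all_goals exact Finset.card_lt_card (childSupports_ssubset D'.2)

section Helpers

open Classical in
lemma mem_infOcc {C : Type u} [Fintype C] {w : ℕ → C} {c : C} :
    c ∈ infOcc w ↔ ∀ N, ∃ n, N ≤ n ∧ w n = c := by
  unfold infOcc
  simp

lemma infOcc_shift {C : Type u} [Fintype C] (w : ℕ → C) (N : ℕ) :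
    infOcc (fun n => w (N + n)) = infOcc w := by
  ext c
  rw [mem_infOcc, mem_infOcc]
  constructor
  · intro h M
    obtain ⟨n, hn, e⟩ := h M
    exact ⟨N + n, by omega, e⟩
  · intro h M
    obtain ⟨n, hn, e⟩ := h (N + M)
    refine ⟨n - N, by omega, ?_⟩
    have : N + (n - N) = n := by omega
    simpa [this] using e

lemma infOcc_eventually {C : Type u} [Fintype C] (w : ℕ → C) :
    ∃ N, ∀ n, N ≤ n → w n ∈ infOcc w := by
  classical
  have h : ∀ c : C, ∃ N, c ∉ infOcc w → ∀ n, N ≤ n → w n ≠ c := by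
    intro c
    by_cases hc : c ∈ infOcc w
    · exact ⟨0, fun h => absurd hc h⟩
    · have h2 := hc
      rw [mem_infOcc] at h2
      push Not at h2
      obtain ⟨N, hN⟩ := h2
      exact ⟨N, fun _ => hN⟩
  choose f hf using h
  refine ⟨Finset.univ.sup f, fun n hn => ?_⟩
  by_contra hc
  exact hf (w n) hc n (le_trans (Finset.le_sup (Finset.mem_univ _)) hn) rfl

lemma infOcc_nonempty {C : Type u} [Fintype C] (w : ℕ → C) : (infOcc w).Nonempty := by
  obtain ⟨N, hN⟩ := infOcc_eventually w
  exact ⟨_, hN N le_rfl⟩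

lemma infOcc_subset {C : Type u} [Fintype C] {w : ℕ → C} {D : Finset C}
    (h : ∀ n, w n ∈ D) : infOcc w ⊆ D := by
  intro c hc
  obtain ⟨n, -, rfl⟩ := mem_infOcc.1 hc 0
  exact h n

/-- The inductive package. -/
structure GoodGraph {C : Type u} [Fintype C] (κ : Cardinal.{u}) (D : Finset C)
    (F : Finset (Finset C)) (m : ℕ) {V : Type u} (le : V → V → Prop) (U : Pregraph C V) :
    Prop where
  po : IsPartialOrder V le
  wf : WellFounded (strictOf le)
  mono : U.MonotoneRel le
  width : ∀ A : Set V, IsAntichain le A → #(↥A) ≤ (m : Cardinal.{u})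
  col : ∀ ⦃v c w⦄, U.Edge v c w → c ∈ D
  sat : ∀ π γ, U.InfPath π γ → infOcc γ ∈ F
  univ : ∀ (VT : Type u) (T : Pregraph C VT), #VT < κ →
    (∃ p : VT → List C, ∀ ⦃v c w⦄, T.Edge v c w → p w = p v ++ [c]) →
    (∀ π γ, T.InfPath π γ → infOcc γ ∈ F) →
    (∀ ⦃v c w⦄, T.Edge v c w → c ∈ D) → ∃ φ : VT → V, T.IsMorphism U φ

lemma sigmaLex_wf {J : Type u} {V : J → Type u} {r : J → J → Prop} {s : ∀ j, V j → V j → Prop}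
    (hr : WellFounded r) (hs : ∀ j, WellFounded (s j)) : WellFounded (Sigma.Lex r s) := by
  constructor
  rintro ⟨j, v⟩
  induction j using hr.induction with
  | _ j ihj =>
    induction v using (hs j).induction with
    | _ v ihv =>
      constructor
      rintro ⟨i, w⟩ h
      cases h with
      | left _ _ h => exact ihj _ h _
      | right _ _ h => exact ihv _ h

lemma sigmaLex_strict_wf {J : Type u} {V : J → Type u} {r : J → J → Prop}
    {s : ∀ j, V j → V j → Prop}
    (hr : WellFounded r) (hs : ∀ j, WellFounded (strictOf (s j))) :
    WellFounded (strictOf (Sigma.Lex r s)) := by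
  refine Subrelation.wf ?_ (sigmaLex_wf hr hs)
  rintro a b ⟨h, hne⟩
  cases h with
  | left _ _ h => exact Sigma.Lex.left _ _ h
  | right _ _ h => exact Sigma.Lex.right _ _ ⟨h, fun e => hne (by rw [e])⟩

lemma sigmaLex_po {J : Type u} {V : J → Type u} {r : J → J → Prop}
    {s : ∀ j, V j → V j → Prop} (ht : ∀ a b c, r a b → r b c → r a c)
    (hr : WellFounded r) (hs : ∀ j, IsPartialOrder (V j) (s j)) :
    IsPartialOrder (Σ j, V j) (Sigma.Lex r s) := by
  have : IsTrans J r := ⟨ht⟩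
  have : Std.Asymm r := ⟨fun a b h h' => hr.asymmetric a b h h'⟩
  exact { }

/-- Cyclic successor. -/
lemma exists_next (J : Type u) [Finite J] [Nonempty J] :
    ∃ nxt : J → J, ∀ j, ∃ m : J → ℕ, ∀ i, i ≠ j → m (nxt i) < m i := by
  obtain ⟨n, ⟨e⟩⟩ := Finite.exists_equiv_fin J
  obtain _ | n := n
  · exact (e (Classical.arbitrary J)).elim0
  refine ⟨fun i => e.symm (e i + 1), fun j => ⟨fun i => (e j - e i).val, fun i hij => ?_⟩⟩
  have h : e j - (e i + 1) = (e j - e i) - 1 := by rw [sub_sub]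
  simp only [Equiv.apply_symm_apply, h]
  have h0 : (0 : Fin (n + 1)) < e j - e i := by
    rw [Fin.pos_iff_ne_zero]
    intro h
    exact hij (e.injective (sub_eq_zero.1 h).symm)
  exact Fin.sub_one_lt_iff.2 h0

lemma exists_stable (g : ℕ → ℕ) (N : ℕ) (hg : ∀ n, N ≤ n → g (n + 1) ≤ g n) :
    ∃ M, N ≤ M ∧ ∀ n, M ≤ n → ¬ g (n + 1) < g n := by
  have key : ∀ k n, N ≤ n → g n = k → ∃ M, N ≤ M ∧ ∀ n, M ≤ n → ¬ g (n + 1) < g n := by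
    intro k
    induction k using Nat.strong_induction_on with
    | _ k ih =>
      intro n hn hk
      by_contra hcon
      push Not at hcon
      obtain ⟨n', h1, h2⟩ := hcon n hn
      have h3 : g n' ≤ g n := by
        clear h2
        induction n', h1 using Nat.le_induction with
        | base => exact le_rfl
        | succ a ha ih' => exact (hg a (by omega)).trans ih'
      have := ih (g (n' + 1)) (by omega) (n' + 1) (by omega) rfl
      obtain ⟨M, hM, h⟩ := this
      obtain ⟨a, ha, hb⟩ := hcon M hM
      exact h a ha hb
  exact key _ N le_rfl rfl

inductive PosEdge {C J : Type u} (V : J → Type u) (U : ∀ j, Pregraph C (V j)) (D : Finset C)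
    (Dj : J → Finset C) (nxt : J → J) : (Σ j, V j) → C → (Σ j, V j) → Prop
  | stay (j : J) (c : C) (v w : V j) : (U j).Edge v c w → PosEdge V U D Dj nxt ⟨j, v⟩ c ⟨j, w⟩
  | switch (j : J) (c : C) (v : V j) (w : V (nxt j)) : c ∈ D → c ∉ Dj j →
      PosEdge V U D Dj nxt ⟨j, v⟩ c ⟨nxt j, w⟩

lemma positive_case {C J : Type u} [Fintype C] [DecidableEq C] [Fintype J] [Nonempty J]
    (κ : Cardinal.{u})
    (D : Finset C) (F : Finset (Finset C)) (Dj : J → Finset C) (m : J → ℕ)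
    (V : J → Type u) (le : ∀ j, V j → V j → Prop) (U : ∀ j, Pregraph C (V j))
    (hg : ∀ j, GoodGraph κ (Dj j) (F.filter (· ⊆ Dj j)) (m j) (le j) (U j))
    (hD : ∀ j, Dj j ⊆ D)
    (hE : ∀ E ⊆ D, E.Nonempty → E ∉ F → ∃ j, E ⊆ Dj j) :
    ∃ (W : Type u) (le' : W → W → Prop) (U' : Pregraph C W),
      GoodGraph κ D F (∑ j, m j) le' U' := by
  classical
  obtain ⟨nxt, hn⟩ := exists_next J
  refine ⟨Σ j, V j, Sigma.Lex (fun _ _ => False) le, ⟨PosEdge V U D Dj nxt⟩, ?_⟩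
  have hcol : ∀ ⦃v c w⦄, PosEdge V U D Dj nxt v c w → c ∈ D := by
    intro v c w h
    cases h with
    | stay j c v w h => exact hD j ((hg j).col h)
    | switch j c v w h1 h2 => exact h1
  refine ⟨?_, ?_, ?_, ?_, hcol, ?_, ?_⟩
  · refine sigmaLex_po (by simp) ⟨fun a => ⟨a, by simp⟩⟩ (fun j => (hg j).po)
  · exact sigmaLex_strict_wf ⟨fun a => ⟨a, by simp⟩⟩ (fun j => (hg j).wf)
  · intro u v c v' u' h1 h2 h3
    cases h1 with
    | left _ _ h => exact h.elim
    | right _ _ h1 =>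
    cases h3 with
    | left _ _ h => exact h.elim
    | right _ _ h3 =>
    cases h2 with
    | stay j c v w h => exact PosEdge.stay _ _ _ _ ((hg _).mono h1 h h3)
    | switch j c v w h1 h2 => exact PosEdge.switch _ _ _ _ h1 h2
  · intro A hA
    have h1 : ∀ j, #(↥{v : V j | (⟨j, v⟩ : Σ j, V j) ∈ A}) ≤ (m j : Cardinal.{u}) := by
      intro j
      apply (hg j).width
      intro a ha b hb hab h
      exact hA ha hb (by intro e; cases e; exact hab rfl) (Sigma.Lex.right _ _ h)
    have h2 : #(↥A) ≤ #(Σ j, ↥{v : V j | (⟨j, v⟩ : Σ j, V j) ∈ A}) := by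
      refine mk_le_of_injective
        (f := fun a => ⟨a.1.1, ⟨a.1.2, a.2⟩⟩) ?_
      rintro ⟨⟨i, a⟩, ha⟩ ⟨⟨j, b⟩, hb⟩ h
      simp only [Sigma.mk.injEq] at h
      obtain ⟨rfl, h⟩ := h
      have := eq_of_heq h
      simp only [Subtype.mk.injEq] at this
      subst this
      rfl
    refine h2.trans ?_
    rw [mk_sigma]
    refine (Cardinal.sum_le_sum _ _ h1).trans ?_
    have h3 : Cardinal.sum (fun j => (m j : Cardinal.{u})) = #(Σ j, ULift.{u} (Fin (m j))) := by
      rw [mk_sigma]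
      simp
    rw [h3, mk_fintype, Fintype.card_sigma]
    simp
  · intro π γ hp
    by_contra hcon
    have hsub : infOcc γ ⊆ D := infOcc_subset fun n => hcol (hp n)
    obtain ⟨j, hj⟩ := hE _ hsub (infOcc_nonempty γ) hcon
    obtain ⟨N, hN⟩ := infOcc_eventually γ
    obtain ⟨μ, hμ⟩ := hn j
    have step : ∀ n, ((π (n + 1)).1 = (π n).1 ∧ γ n ∈ Dj (π n).1) ∨
        ((π (n + 1)).1 = nxt (π n).1 ∧ γ n ∉ Dj (π n).1) := by
      intro n
      have h : PosEdge V U D Dj nxt (π n) (γ n) (π (n + 1)) := hp n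
      revert h
      generalize π n = a
      generalize π (n + 1) = b
      generalize γ n = c
      intro h
      cases h with
      | stay j c v w h => exact Or.inl ⟨rfl, (hg j).col h⟩
      | switch j c v w h1 h2 => exact Or.inr ⟨rfl, h2⟩
    have step2 : ∀ n, N ≤ n → ((π (n + 1)).1 = (π n).1 ∧ γ n ∈ Dj (π n).1) ∨
        μ (π (n + 1)).1 < μ (π n).1 := by
      intro n h
      rcases step n with h1 | ⟨h1, h2⟩
      · exact Or.inl h1
      · right
        rw [h1]
        apply hμ
        intro e
        rw [e] at h2
        exact h2 (hj (hN n h))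
    obtain ⟨M, hM, hst⟩ := exists_stable (fun n => μ (π n).1) N (by
      intro n h
      rcases step2 n h with h1 | h1
      · simp [h1.1]
      · exact h1.le)
    have hconst : ∀ n, (π (M + n)).1 = (π M).1 := by
      intro n
      induction n with
      | zero => rfl
      | succ n ih =>
        rcases step2 (M + n) (by omega) with h1 | h1
        · rw [← ih, ← h1.1]; rfl
        · exact absurd h1 (hst _ (by omega))
    have hin : ∀ n, γ (M + n) ∈ Dj (π M).1 := by
      intro n
      rcases step2 (M + n) (by omega) with h1 | h1
      · rw [← hconst n]; exact h1.2
      · exact absurd h1 (hst _ (by omega))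
    generalize (π M).1 = i at hconst hin
    have hv : ∀ n, ∃ v : V i, π (M + n) = ⟨i, v⟩ := by
      intro n
      have := hconst n
      generalize π (M + n) = a at this
      obtain ⟨a, b⟩ := a
      subst this
      exact ⟨b, rfl⟩
    choose v hv using hv
    have hpath : (U i).InfPath v (fun n => γ (M + n)) := by
      intro n
      have h : PosEdge V U D Dj nxt (π (M + n)) (γ (M + n)) (π (M + (n + 1))) := hp (M + n)
      have hc := hin n
      change (U i).Edge (v n) (γ (M + n)) (v (n + 1))
      rw [hv n, hv (n + 1)] at h
      generalize hx : (⟨i, v n⟩ : Σ j, V j) = x at h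
      generalize hy : (⟨i, v (n + 1)⟩ : Σ j, V j) = y at h
      generalize γ (M + n) = c at h hc ⊢
      cases h with
      | stay j c a b h =>
        cases hx
        cases hy
        exact h
      | switch j c a b h1 h2 =>
        cases hx
        exact absurd hc h2
    have := (hg i).sat _ _ hpath
    rw [infOcc_shift] at this
    exact hcon (Finset.mem_filter.1 this).1
  · intro VT T hκ ⟨p, hp⟩ hs hc
    let δ : J → C → J := fun j c => if c ∈ Dj j then j else nxt j
    let l : VT → J := fun v => (p v).foldl δ (Classical.arbitrary J)
    have hl : ∀ ⦃v c w⦄, T.Edge v c w → l w = δ (l v) c := by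
      intro v c w h
      simp only [l, hp h, List.foldl_append, List.foldl_cons, List.foldl_nil]
    have hφ : ∀ j, ∃ φ : VT → V j, ∀ ⦃v c w⦄, T.Edge v c w → c ∈ Dj j →
        (U j).Edge (φ v) c (φ w) := by
      intro j
      obtain ⟨φ, h⟩ := (hg j).univ VT ⟨fun v c w => T.Edge v c w ∧ c ∈ Dj j⟩ hκ
        ⟨p, fun v c w h => hp h.1⟩
        (by
          intro π γ h
          rw [Finset.mem_filter]
          exact ⟨hs π γ fun n => (h n).1, infOcc_subset fun n => (h n).2⟩)
        (fun v c w h => h.2)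
      exact ⟨φ, fun v c w h1 h2 => h ⟨h1, h2⟩⟩
    choose φ hφ using hφ
    refine ⟨fun v => ⟨l v, φ (l v) v⟩, ?_⟩
    intro v c w h
    have h1 := hl h
    by_cases hcl : c ∈ Dj (l v)
    · have h2 : l w = l v := by rw [h1]; exact if_pos hcl
      change PosEdge V U D Dj nxt ⟨l v, φ (l v) v⟩ c ⟨l w, φ (l w) w⟩
      rw [h2]
      exact PosEdge.stay _ _ _ _ (hφ _ h hcl)
    · have h2 : l w = nxt (l v) := by rw [h1]; exact if_neg hcl
      change PosEdge V U D Dj nxt ⟨l v, φ (l v) v⟩ c ⟨l w, φ (l w) w⟩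
      rw [h2]
      exact PosEdge.switch _ _ _ _ (hc h) hcl

end Helpers

section Helpers2

/-- One step of a pregraph. -/
def PStep {C V : Type u} (G : Pregraph C V) (a b : V) : Prop := ∃ c, G.Edge a c b

/-- A vertex from which `n` steps lead to the source of a `c`-edge. -/
def DistTo {C V : Type u} (G : Pregraph C V) (c : C) : ℕ → V → Prop
  | 0, v => ∃ w, G.Edge v c w
  | n + 1, v => ∃ d w, G.Edge v d w ∧ DistTo G c n w

lemma exists_distTo {C V : Type u} (G : Pregraph C V) (c : C) {v u w : V}
    (h : Relation.ReflTransGen (PStep G) v u) (he : G.Edge u c w) : ∃ n, DistTo G c n v := by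
  induction h using Relation.ReflTransGen.head_induction_on with
  | refl => exact ⟨0, w, he⟩
  | head h _ ih =>
    obtain ⟨n, hn⟩ := ih
    obtain ⟨d, hd⟩ := h
    exact ⟨n + 1, d, _, hd, hn⟩

/-- If from everywhere in a closed set `S` every colour of `E` is reachable, some path has all the
colours of `E` infinitely often. -/
lemma exists_path_all {C V : Type u} [Fintype C] (G : Pregraph C V) (S : Set V) (E : Finset C)
    (hE : E.Nonempty) (hS : ∀ ⦃v c w⦄, v ∈ S → G.Edge v c w → w ∈ S)
    (hd : ∀ v ∈ S, ∀ c ∈ E, ∃ n, DistTo G c n v) (t : V) (ht : t ∈ S) :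
    ∃ π γ, π 0 = t ∧ G.InfPath π γ ∧ E ⊆ infOcc γ := by
  classical
  -- a schedule
  obtain ⟨f, hfE, hf⟩ : ∃ f : ℕ → C, (∀ n, f n ∈ E) ∧ ∀ c ∈ E, ∀ N, ∃ n, N ≤ n ∧ f n = c := by
    have : Nonempty E := ⟨⟨_, hE.choose_spec⟩⟩
    obtain ⟨g, hg⟩ := exists_surjective_nat E
    refine ⟨fun n => g n.unpair.2, fun n => (g _).2, fun c hc N => ?_⟩
    obtain ⟨k, hk⟩ := hg ⟨c, hc⟩
    exact ⟨Nat.pair N k, Nat.left_le_pair N k, by simp [hk]⟩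
  -- one move with a counter
  let d : V → C → ℕ := fun v c => if h : ∃ n, DistTo G c n v then Nat.find h else 0
  have hdd : ∀ v ∈ S, ∀ c ∈ E, DistTo G c (d v c) v := by
    intro v hv c hc
    have h := hd v hv c hc
    simp only [d, dif_pos h]
    exact Nat.find_spec h
  have hdle : ∀ v c n, DistTo G c n v → d v c ≤ n := by
    intro v c n h
    have h' : ∃ n, DistTo G c n v := ⟨n, h⟩
    simp only [d, dif_pos h']
    exact Nat.find_min' h' h
  have hmove : ∀ s : S × ℕ, ∃ (c : C) (s' : S × ℕ), G.Edge s.1 c s'.1 ∧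
      ((c = f s.2 ∧ s'.2 = s.2 + 1) ∨ (s'.2 = s.2 ∧ d s'.1 (f s.2) < d s.1 (f s.2))) := by
    rintro ⟨⟨v, hv⟩, n⟩
    have h := hdd v hv (f n) (hfE n)
    generalize hk : d v (f n) = k at h
    cases k with
    | zero =>
      obtain ⟨w, hw⟩ := h
      exact ⟨f n, ⟨⟨w, hS hv hw⟩, n + 1⟩, hw, Or.inl ⟨rfl, rfl⟩⟩
    | succ k =>
      obtain ⟨c, w, hw, h⟩ := h
      refine ⟨c, ⟨⟨w, hS hv hw⟩, n⟩, hw, Or.inr ⟨rfl, ?_⟩⟩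
      have := hdle _ _ _ h
      dsimp only
      omega
  choose col nx hedge hprog using hmove
  let st : ℕ → S × ℕ := fun n => Nat.rec (⟨t, ht⟩, 0) (fun _ s => nx s) n
  have hst : ∀ n, st (n + 1) = nx (st n) := fun n => rfl
  refine ⟨fun n => (st n).1, fun n => col (st n), rfl, fun n => ?_, ?_⟩
  · have := hedge (st n)
    rw [← hst] at this
    exact this
  have hadv : ∀ k i, d (st i).1 (f (st i).2) = k →
      ∃ j, i ≤ j ∧ (st j).2 = (st i).2 ∧ col (st j) = f (st i).2 ∧
        (st (j + 1)).2 = (st i).2 + 1 := by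
    intro k
    induction k using Nat.strong_induction_on with
    | _ k ih =>
      intro i hi
      rcases hprog (st i) with ⟨h1, h2⟩ | ⟨h1, h2⟩
      · exact ⟨i, le_rfl, rfl, h1, h2⟩
      · rw [← hst] at h1 h2
        obtain ⟨j, hj, e1, e2, e3⟩ := ih _ (by rw [← hi]; exact h2) (i + 1) (by rw [h1])
        rw [h1] at e1 e2 e3
        exact ⟨j, by omega, e1, e2, e3⟩
  have hvisit : ∀ n, ∃ i, n ≤ i ∧ (st i).2 = n := by
    intro n
    induction n with
    | zero => exact ⟨0, le_rfl, rfl⟩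
    | succ n ih =>
      obtain ⟨i, hi, e⟩ := ih
      obtain ⟨j, hj, -, -, e3⟩ := hadv _ i rfl
      exact ⟨j + 1, by omega, by rw [e3, e]⟩
  intro c hc
  rw [mem_infOcc]
  intro N
  obtain ⟨n, hn, rfl⟩ := hf c hc N
  obtain ⟨i, hi, e⟩ := hvisit n
  obtain ⟨j, hj, -, e2, -⟩ := hadv _ i rfl
  exact ⟨j, by omega, by rw [e2, e]⟩

open Classical in
/-- The colours seen from a vertex. -/
noncomputable def colFrom {C V : Type u} [Fintype C] (G : Pregraph C V) (t : V) : Finset C :=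
  Finset.univ.filter fun c => ∃ u w, Relation.ReflTransGen (PStep G) t u ∧ G.Edge u c w

lemma mem_colFrom {C V : Type u} [Fintype C] {G : Pregraph C V} {t : V} {c : C} :
    c ∈ colFrom G t ↔ ∃ u w, Relation.ReflTransGen (PStep G) t u ∧ G.Edge u c w := by
  simp [colFrom]

lemma exists_colFrom {C V : Type u} [Fintype C] (G : Pregraph C V) (F : Finset (Finset C))
    (hs : ∀ π γ, G.InfPath π γ → infOcc γ ∈ F) (v₀ : V) :
    ∃ t, Relation.ReflTransGen (PStep G) v₀ t ∧ (colFrom G t = ∅ ∨ colFrom G t ∈ F) := by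
  classical
  have hex : ∃ n, ∃ t, Relation.ReflTransGen (PStep G) v₀ t ∧ (colFrom G t).card = n :=
    ⟨_, v₀, Relation.ReflTransGen.refl, rfl⟩
  obtain ⟨t, ht, hcard⟩ := Nat.find_spec hex
  have hmin : ∀ s, Relation.ReflTransGen (PStep G) t s → colFrom G s = colFrom G t := by
    intro s h
    apply Finset.eq_of_subset_of_card_le
    · intro c hc
      obtain ⟨u, w, h1, h2⟩ := mem_colFrom.1 hc
      exact mem_colFrom.2 ⟨u, w, h.trans h1, h2⟩
    · rw [hcard]
      exact Nat.find_min' hex ⟨s, ht.trans h, rfl⟩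
  refine ⟨t, ht, ?_⟩
  rw [or_iff_not_imp_left]
  intro hne
  obtain ⟨π, γ, h0, hp, hE⟩ := exists_path_all G {s | Relation.ReflTransGen (PStep G) t s}
    (colFrom G t) (Finset.nonempty_iff_ne_empty.2 hne)
    (fun v c w hv h => Relation.ReflTransGen.tail hv ⟨c, h⟩)
    (by
      intro v hv c hc
      rw [← hmin v hv] at hc
      obtain ⟨u, w, h1, h2⟩ := mem_colFrom.1 hc
      exact exists_distTo G c h1 h2) t Relation.ReflTransGen.refl
  have hr : ∀ n, Relation.ReflTransGen (PStep G) t (π n) := by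
    intro n
    induction n with
    | zero => rw [h0]
    | succ n ih => exact ih.tail ⟨_, hp n⟩
  have : colFrom G t = infOcc γ := by
    apply Finset.Subset.antisymm hE
    exact infOcc_subset fun n => mem_colFrom.2 ⟨_, _, hr n, hp n⟩
  rw [this]
  exact hs _ _ hp

inductive StackEdge {C J : Type u} (V : J → Type u) (r : J → J → Prop)
    (U : ∀ j, Pregraph C (V j)) (D : Finset C) : (Σ j, V j) → C → (Σ j, V j) → Prop
  | stay (j : J) (c : C) (v w : V j) : (U j).Edge v c w → StackEdge V r U D ⟨j, v⟩ c ⟨j, w⟩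
  | down (i j : J) (c : C) (v : V i) (w : V j) : c ∈ D → r j i →
      StackEdge V r U D ⟨i, v⟩ c ⟨j, w⟩

lemma peel {ι VT : Type u} (r : ι → ι → Prop) [IsWellOrder ι r] (hκ : #VT < #ι)
    (g : Set VT → Set VT) (hg : ∀ X, X ≠ Set.univ → (g X).Nonempty ∧ g X ⊆ Xᶜ) :
    ∃ (X : ι → Set VT) (l : VT → ι), ∀ v, v ∈ g (X (l v)) ∧ X (l v) ≠ Set.univ ∧
      (∀ w, w ∈ X (l v) → r (l w) (l v)) ∧ ∀ w, w ∈ g (X (l v)) → l w = l v := by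
  classical
  let A : ι → Set VT := (IsWellFounded.wf (r := r)).fix
    (fun i ih => g {v | ∃ j, ∃ h : r j i, v ∈ ih j h})
  have hA : ∀ i, A i = g {v | ∃ j, r j i ∧ v ∈ A j} := by
    intro i
    have := (IsWellFounded.wf (r := r)).fix_eq
      (fun i (ih : ∀ j, r j i → Set VT) => g {v | ∃ j, ∃ h : r j i, v ∈ ih j h}) i
    simp only [exists_prop] at this
    exact this
  let X : ι → Set VT := fun i => {v | ∃ j, r j i ∧ v ∈ A j}
  have hAX : ∀ i, A i = g (X i) := hA
  -- some X is everything
  have hfull : ∃ i, X i = Set.univ := by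
    by_contra hcon
    push Not at hcon
    choose t ht using fun i => (hg (X i) (hcon i)).1
    have key : ∀ i j, r i j → t i ≠ t j := by
      intro i j hij e
      apply (hg (X j) (hcon j)).2 (ht j)
      exact ⟨i, hij, by rw [hAX, ← e]; exact ht i⟩
    have hinj : Function.Injective t := by
      intro i j e
      rcases trichotomous_of r i j with h | h | h
      · exact absurd e (key i j h)
      · exact h
      · exact absurd e.symm (key j i h)
    exact absurd hκ (not_lt.2 (mk_le_of_injective hinj))
  obtain ⟨i₀, hi₀⟩ := hfull
  -- least index
  let i₁ := (IsWellFounded.wf (r := r)).min {i | X i = Set.univ} ⟨i₀, hi₀⟩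
  have hi₁ : X i₁ = Set.univ := (IsWellFounded.wf (r := r)).min_mem {i | X i = Set.univ} ⟨i₀, hi₀⟩
  have hlt : ∀ i, r i i₁ → X i ≠ Set.univ := fun i h h' =>
    (IsWellFounded.wf (r := r)).not_lt_min {i | X i = Set.univ} h' h
  have hl : ∀ v, ∃ i, r i i₁ ∧ v ∈ A i := by
    intro v
    have : v ∈ X i₁ := by rw [hi₁]; trivial
    exact this
  choose l hl1 hl2 using hl
  have uniq : ∀ w i j, r i i₁ → r j i₁ → w ∈ A i → w ∈ A j → i = j := by
    have key : ∀ w i j, r j i₁ → w ∈ A i → w ∈ A j → ¬ r i j := by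
      intro w i j hj h1 h2 h
      rw [hAX] at h2
      exact (hg _ (hlt j hj)).2 h2 ⟨i, h, h1⟩
    intro w i j hi hj h1 h2
    rcases trichotomous_of r i j with h | h | h
    · exact absurd h (key w i j hj h1 h2)
    · exact h
    · exact absurd h (key w j i hi h2 h1)
  refine ⟨X, l, fun v => ⟨by rw [← hAX]; exact hl2 v, hlt _ (hl1 v), ?_, ?_⟩⟩
  · rintro w ⟨j, hj, hw⟩
    rw [uniq w (l w) j (hl1 w) (_root_.trans hj (hl1 v)) (hl2 w) hw]
    exact hj
  · intro w hw
    rw [← hAX] at hw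
    exact uniq w _ _ (hl1 w) (hl1 v) (hl2 w) hw

lemma eventually_least {J : Type u} (r : J → J → Prop) (hr : WellFounded r) (f : ℕ → J)
    (hf : ∀ n, r (f (n + 1)) (f n) ∨ f (n + 1) = f n) : ∃ M, ∀ n, f (M + n) = f M := by
  obtain ⟨M, hM⟩ : ∃ M, f M = hr.min (Set.range f) ⟨_, 0, rfl⟩ :=
    hr.min_mem (Set.range f) ⟨_, 0, rfl⟩
  refine ⟨M, fun n => ?_⟩
  induction n with
  | zero => rfl
  | succ n ih =>
    rcases hf (M + n) with h | h
    · rw [ih, hM] at h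
      exact absurd h (hr.not_lt_min (Set.range f) ⟨_, rfl⟩)
    · exact h.trans ih

lemma negative_case {C K : Type u} [Fintype C] [DecidableEq C]
    (κ : Cardinal.{u})
    (D : Finset C) (F : Finset (Finset C)) (Dk : K → Finset C) (m : ℕ)
    (Vk : K → Type u) (lek : ∀ k, Vk k → Vk k → Prop) (Uk : ∀ k, Pregraph C (Vk k))
    (hgk : ∀ k, GoodGraph κ (Dk k) (F.filter (· ⊆ Dk k)) m (lek k) (Uk k))
    (hD : ∀ k, Dk k ⊆ D)
    (hE : ∀ E ⊆ D, E = ∅ ∨ E ∈ F → ∃ k, E ⊆ Dk k) :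
    ∃ (W : Type u) (le' : W → W → Prop) (U' : Pregraph C W),
      GoodGraph κ D F m le' U' := by
  classical
  let ι : Type u := κ.out
  let J : Type u := ι × K
  let r : J → J → Prop := Prod.Lex (WellOrderingRel (α := ι)) (WellOrderingRel (α := K))
  have hwo : IsWellOrder J r := inferInstanceAs (IsWellOrder (ι × K) (Prod.Lex _ _))
  have hwf : WellFounded r := hwo.wf
  let V : J → Type u := fun j => Vk j.2
  let le : ∀ j, V j → V j → Prop := fun j => lek j.2
  let U : ∀ j, Pregraph C (V j) := fun j => Uk j.2
  have hg : ∀ j, GoodGraph κ (Dk j.2) (F.filter (· ⊆ Dk j.2)) m (le j) (U j) := fun j => hgk j.2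
  refine ⟨Σ j, V j, Sigma.Lex r le, ⟨StackEdge V r U D⟩, ?_⟩
  have hcol : ∀ ⦃v c w⦄, StackEdge V r U D v c w → c ∈ D := by
    intro v c w h
    cases h with
    | stay j c v w h => exact hD j.2 ((hg j).col h)
    | down i j c v w h1 h2 => exact h1
  have htr : ∀ a b c, r a b → r b c → r a c := fun a b c h h' => _root_.trans h h'
  refine ⟨?_, ?_, ?_, ?_, hcol, ?_, ?_⟩
  · exact sigmaLex_po htr hwf (fun j => (hg j).po)
  · exact sigmaLex_strict_wf hwf (fun j => (hg j).wf)
  · intro u v c v' u' h1 h2 h3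
    have h2' : StackEdge V r U D v c v' := h2
    have hcD := hcol h2'
    change StackEdge V r U D u c u'
    cases h1 with
    | left _ _ h1 =>
      cases h3 with
      | left _ _ h3 =>
        cases h2' with
        | stay j c v w h => exact StackEdge.down _ _ _ _ _ hcD (htr _ _ _ h3 h1)
        | down i j c v w _ h =>
          have h4 := htr _ _ _ h3 h
          exact StackEdge.down _ _ _ _ _ hcD (htr _ _ _ h4 h1)
      | right _ _ h3 =>
        cases h2' with
        | stay j c v w h => exact StackEdge.down _ _ _ _ _ hcD h1
        | down i j c v w _ h => exact StackEdge.down _ _ _ _ _ hcD (htr _ _ _ h h1)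
    | right _ _ h1 =>
      cases h3 with
      | left _ _ h3 =>
        cases h2' with
        | stay j c v w h => exact StackEdge.down _ _ _ _ _ hcD h3
        | down i j c v w _ h => exact StackEdge.down _ _ _ _ _ hcD (htr _ _ _ h3 h)
      | right _ _ h3 =>
        cases h2' with
        | stay j c v w h => exact StackEdge.stay _ _ _ _ ((hg _).mono h1 h h3)
        | down i j c v w _ h => exact StackEdge.down _ _ _ _ _ hcD h
  · intro A hA
    rcases A.eq_empty_or_nonempty with rfl | ⟨⟨j, v₀⟩, hv₀⟩
    · simp
    have hsame : ∀ a ∈ A, a.1 = j := by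
      intro a ha
      rcases trichotomous_of r a.1 j with h | h | h
      · have hne : a ≠ ⟨j, v₀⟩ := by
          rintro rfl
          exact hwf.asymmetric _ _ h h
        exact absurd (by obtain ⟨i, a⟩ := a; exact Sigma.Lex.left _ _ h) (hA ha hv₀ hne)
      · exact h
      · have hne : (⟨j, v₀⟩ : Σ j, V j) ≠ a := by
          rintro rfl
          exact hwf.asymmetric _ _ h h
        exact absurd (by obtain ⟨i, a⟩ := a; exact Sigma.Lex.left _ _ h) (hA hv₀ ha hne)
    have h1 : #(↥{v : V j | (⟨j, v⟩ : Σ j, V j) ∈ A}) ≤ (m : Cardinal.{u}) := by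
      apply (hg j).width
      intro a ha b hb hab h
      exact hA ha hb (by intro e; cases e; exact hab rfl) (Sigma.Lex.right _ _ h)
    refine le_trans ?_ h1
    refine mk_le_of_surjective (f := fun v => ⟨⟨j, v.1⟩, v.2⟩) ?_
    rintro ⟨⟨i, a⟩, ha⟩
    have := hsame _ ha
    dsimp only at this
    subst this
    exact ⟨⟨a, ha⟩, rfl⟩
  · intro π γ hp
    have step : ∀ n, r (π (n + 1)).1 (π n).1 ∨ (π (n + 1)).1 = (π n).1 := by
      intro n
      have h : StackEdge V r U D (π n) (γ n) (π (n + 1)) := hp n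
      revert h
      generalize π n = a
      generalize π (n + 1) = b
      generalize γ n = c
      intro h
      cases h with
      | stay j c v w h => exact Or.inr rfl
      | down i j c v w h1 h2 => exact Or.inl h2
    obtain ⟨M, hconst⟩ := eventually_least r hwf (fun n => (π n).1) step
    generalize (π M).1 = i at hconst
    have hv : ∀ n, ∃ v : V i, π (M + n) = ⟨i, v⟩ := by
      intro n
      have := hconst n
      generalize π (M + n) = a at this
      obtain ⟨a, b⟩ := a
      subst this
      exact ⟨b, rfl⟩
    choose v hv using hv
    have hpath : (U i).InfPath v (fun n => γ (M + n)) := by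
      intro n
      have h : StackEdge V r U D (π (M + n)) (γ (M + n)) (π (M + (n + 1))) := hp (M + n)
      change (U i).Edge (v n) (γ (M + n)) (v (n + 1))
      rw [hv n, hv (n + 1)] at h
      generalize hx : (⟨i, v n⟩ : Σ j, V j) = x at h
      generalize hy : (⟨i, v (n + 1)⟩ : Σ j, V j) = y at h
      generalize γ (M + n) = c at h ⊢
      cases h with
      | stay j c a b h =>
        cases hx
        cases hy
        exact h
      | down i j c a b h1 h2 =>
        cases hx
        cases hy
        exact absurd h2 (fun h => hwf.asymmetric _ _ h h)
    have := (hg i).sat _ _ hpath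
    rw [infOcc_shift] at this
    exact (Finset.mem_filter.1 this).1
  · intro VT T hκ ⟨p, hp⟩ hs hc
    have hpiece : ∀ X : Set VT, ∃ B : Set VT, X ≠ Set.univ → B.Nonempty ∧ B ⊆ Xᶜ ∧
        (∀ ⦃v c w⦄, v ∈ B → T.Edge v c w → w ∈ X ∨ w ∈ B) ∧
        ∃ k, ∃ φ : VT → Vk k, ∀ ⦃v c w⦄, v ∈ B → w ∈ B → T.Edge v c w →
          (Uk k).Edge (φ v) c (φ w) := by
      intro X
      by_cases hX : X = Set.univ
      · exact ⟨∅, fun h => absurd hX h⟩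
      obtain ⟨v₀, hv₀⟩ := (Set.ne_univ_iff_exists_notMem X).1 hX
      let G : Pregraph C VT := ⟨fun v c w => T.Edge v c w ∧ v ∉ X ∧ w ∉ X⟩
      obtain ⟨t, ht, hcolt⟩ := exists_colFrom G F
        (fun π γ h => hs π γ fun n => (h n).1) v₀
      have hstay : ∀ a b, Relation.ReflTransGen (PStep G) a b → a ∉ X → b ∉ X := by
        intro a b h ha
        cases h with
        | refl => exact ha
        | tail _ h => obtain ⟨c, h⟩ := h; exact h.2.2
      have htX := hstay _ _ ht hv₀
      refine ⟨{v | Relation.ReflTransGen (PStep G) t v}, fun _ =>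
        ⟨⟨t, Relation.ReflTransGen.refl⟩, fun v hv => hstay _ _ hv htX, ?_, ?_⟩⟩
      · intro v c w hv h
        by_cases hw : w ∈ X
        · exact Or.inl hw
        · exact Or.inr (Relation.ReflTransGen.tail hv ⟨c, h, hstay _ _ hv htX, hw⟩)
      · obtain ⟨k, hk⟩ := hE (colFrom G t) (by
          intro c hc'
          obtain ⟨u, w, -, h⟩ := mem_colFrom.1 hc'
          exact hc h.1) hcolt
        refine ⟨k, ?_⟩
        have hin : ∀ ⦃v c w⦄, Relation.ReflTransGen (PStep G) t v →
            Relation.ReflTransGen (PStep G) t w → T.Edge v c w → c ∈ Dk k := by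
          intro v c w hv hw h
          exact hk (mem_colFrom.2 ⟨v, w, hv, h, hstay _ _ hv htX, hstay _ _ hw htX⟩)
        obtain ⟨φ, h⟩ := (hgk k).univ VT
          ⟨fun v c w => T.Edge v c w ∧ Relation.ReflTransGen (PStep G) t v ∧
            Relation.ReflTransGen (PStep G) t w⟩ hκ
          ⟨p, fun v c w h => hp h.1⟩
          (by
            intro π γ h
            rw [Finset.mem_filter]
            exact ⟨hs π γ fun n => (h n).1, infOcc_subset fun n =>
              hin (h n).2.1 (h n).2.2 (h n).1⟩)
          (fun v c w h => hin h.2.1 h.2.2 h.1)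
        exact ⟨φ, fun v c w h1 h2 h3 => h ⟨h3, h1, h2⟩⟩
    choose g hgp using hpiece
    obtain ⟨X, l, hl⟩ := peel (ι := ι) (VT := VT) WellOrderingRel (by simpa [ι] using hκ) g
      (fun X hX => ⟨(hgp X hX).1, (hgp X hX).2.1⟩)
    have hpk : ∀ i : ι, ∃ (k : K) (φ : VT → Vk k), X i ≠ Set.univ →
        ∀ ⦃v c w⦄, v ∈ g (X i) → w ∈ g (X i) → T.Edge v c w → (Uk k).Edge (φ v) c (φ w) := by
      intro i
      by_cases hX : X i = Set.univ
      · obtain ⟨k, -⟩ := hE ∅ (by simp) (Or.inl rfl)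
        obtain ⟨φ, -⟩ := (hgk k).univ VT ⟨fun _ _ _ => False⟩ hκ
          ⟨p, fun v c w h => h.elim⟩ (fun π γ h => (h 0).elim) (fun v c w h => h.elim)
        exact ⟨k, φ, fun h => absurd hX h⟩
      · obtain ⟨k, φ, h⟩ := (hgp _ hX).2.2.2
        exact ⟨k, φ, fun _ => h⟩
    choose kk φ hφ using hpk
    refine ⟨fun v => ⟨(l v, kk (l v)), φ (l v) v⟩, ?_⟩
    intro v c w h
    obtain ⟨h1, h2, h3, h4⟩ := hl v
    change StackEdge V r U D ⟨(l v, kk (l v)), φ (l v) v⟩ c ⟨(l w, kk (l w)), φ (l w) w⟩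
    rcases (hgp _ h2).2.2.1 h1 h with h5 | h5
    · exact StackEdge.down _ _ _ _ _ (hc h) (Prod.Lex.left _ _ (h3 w h5))
    · rw [h4 w h5]
      exact StackEdge.stay (V := V) (U := U) (l v, kk (l v)) c _ _ (hφ _ h2 h1 h5 h)

lemma exists_maximal_superset {C : Type u} [DecidableEq C] (D E : Finset C)
    (P : Finset C → Prop) (hE : E ⊆ D) (hP : P E) :
    ∃ M ⊆ D, E ⊆ M ∧ P M ∧ ∀ M' ⊆ D, P M' → M ⊆ M' → M = M' := by
  classical
  obtain ⟨M, hM, hmax⟩ := Finset.exists_max_image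
    (D.powerset.filter fun M => E ⊆ M ∧ P M) Finset.card
    ⟨E, by simp [hE, hP]⟩
  simp only [Finset.mem_filter, Finset.mem_powerset] at hM hmax
  refine ⟨M, hM.1, hM.2.1, hM.2.2, fun M' h1 h2 h3 => ?_⟩
  exact Finset.eq_of_subset_of_card_le h3 (hmax M' ⟨h1, hM.2.1.trans h3, h2⟩)

lemma goodGraph_exists {C : Type u} [Fintype C] [DecidableEq C] (κ : Cardinal.{u}) :
    ∀ (n : ℕ) (D : Finset C), D.card = n → ∀ (F : Finset (Finset C)), (∀ A ∈ F, A.Nonempty) →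
    ∃ (V : Type u) (le : V → V → Prop) (U : Pregraph C V),
      GoodGraph κ D F (memMuller D F) le U := by
  intro n
  induction n using Nat.strong_induction_on with
  | _ n ih =>
  intro D hDn F hF
  have hrec : ∀ k : {D' // D' ∈ childSupports D F},
      ∃ (V : Type u) (le : V → V → Prop) (U : Pregraph C V),
      GoodGraph κ k.1 (F.filter (· ⊆ k.1)) (memMuller k.1 (F.filter (· ⊆ k.1))) le U := by
    intro k
    refine ih k.1.card ?_ k.1 rfl _ (fun A hA => hF A (Finset.mem_filter.1 hA).1)
    rw [← hDn]
    exact Finset.card_lt_card (childSupports_ssubset k.2)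
  choose V le U hg using hrec
  have hsubD : ∀ k : {D' // D' ∈ childSupports D F}, k.1 ⊆ D :=
    fun k => (childSupports_ssubset k.2).1
  have htriv : IsPartialOrder PUnit.{u+1} (fun _ _ => True) :=
    { refl := fun _ => trivial, trans := fun _ _ _ _ _ => trivial, antisymm := fun _ _ _ _ => rfl }
  have hwidth : ∀ A : Set PUnit.{u+1}, #(↥A) ≤ ((1 : ℕ) : Cardinal.{u}) := by
    intro A
    rw [Nat.cast_one, Cardinal.le_one_iff_subsingleton]
    infer_instance
  have hwfU : WellFounded (strictOf (fun _ _ : PUnit.{u+1} => True)) :=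
    ⟨fun a => ⟨a, fun b h => absurd rfl h.2⟩⟩
  by_cases hDF : D ∈ F
  · have hE : ∀ E ⊆ D, E.Nonempty → E ∉ F → ∃ j : {D' // D' ∈ childSupports D F}, E ⊆ j.1 := by
      intro E h1 h2 h3
      obtain ⟨M, hM, hEM, hP, hmax⟩ := exists_maximal_superset D E
        (fun M => M.Nonempty ∧ M ∉ F) h1 ⟨h2, h3⟩
      refine ⟨⟨M, ?_⟩, hEM⟩
      rw [childSupports, if_pos hDF, Finset.mem_filter, Finset.mem_powerset]
      exact ⟨hM, hP.1, hP.2, fun D'' h h' h'' => hmax D'' (Finset.mem_powerset.1 h) ⟨h', h''⟩⟩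
    by_cases hch : childSupports D F = ∅
    · rw [memMuller, if_pos hch]
      refine ⟨PUnit, fun _ _ => True, ⟨fun _ c _ => c ∈ D⟩, htriv, hwfU,
        fun u v c v' u' _ h _ => h, fun A _ => hwidth A, fun v c w h => h, ?_, ?_⟩
      · intro π γ hp
        by_contra hcon
        obtain ⟨j, -⟩ := hE _ (infOcc_subset hp) (infOcc_nonempty γ) hcon
        have := j.2
        simp [hch] at this
      · intro VT T _ _ _ hc
        exact ⟨fun _ => PUnit.unit, fun v c w h => hc h⟩
    · rw [memMuller, if_neg hch, if_pos hDF]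
      obtain ⟨D₀, hD₀⟩ := Finset.nonempty_iff_ne_empty.2 hch
      have : Nonempty {D' // D' ∈ childSupports D F} := ⟨⟨D₀, hD₀⟩⟩
      exact positive_case κ D F (fun j : {D' // D' ∈ childSupports D F} => j.1) _ V le U hg
        hsubD hE
  · by_cases hch : childSupports D F = ∅
    · rw [memMuller, if_pos hch]
      have hno : ∀ E ⊆ D, E ∉ F := by
        intro E h1 h3
        obtain ⟨M, hM, hEM, hP, hmax⟩ := exists_maximal_superset D E
          (fun M => M.Nonempty ∧ M ∈ F) h1 ⟨hF E h3, h3⟩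
        have : M ∈ childSupports D F := by
          rw [childSupports, if_neg hDF, Finset.mem_filter, Finset.mem_powerset]
          exact ⟨hM, hP.1, hP.2, fun D'' h h' h'' => hmax D'' (Finset.mem_powerset.1 h) ⟨h', h''⟩⟩
        simp [hch] at this
      refine negative_case (K := PUnit.{u+1}) κ D F (fun _ => ∅) 1 (fun _ => PUnit)
        (fun _ _ _ => True) (fun _ => ⟨fun _ _ _ => False⟩) ?_ (by simp) ?_
      · intro _
        refine ⟨htriv, hwfU, fun u v c v' u' _ h _ => h, fun A _ => hwidth A,
          fun v c w h => h.elim, fun π γ hp => (hp 0).elim, ?_⟩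
        intro VT T _ _ _ hc
        exact ⟨fun _ => PUnit.unit, fun v c w h => absurd (hc h) (by simp)⟩
      · rintro E hED (rfl | h)
        · exact ⟨PUnit.unit, by simp⟩
        · exact absurd h (hno E hED)
    · obtain ⟨D₀, hD₀⟩ := Finset.nonempty_iff_ne_empty.2 hch
      refine negative_case κ D F (fun j : {D' // D' ∈ childSupports D F} => j.1) _ V le U ?_
        hsubD ?_
      · intro k
        refine { hg k with width := fun A hA => ((hg k).width A hA).trans ?_ }
        rw [memMuller.eq_def D F, if_neg hch, if_neg hDF]
        exact_mod_cast Finset.le_sup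
          (f := fun D' : {D' // D' ∈ childSupports D F} =>
            memMuller D'.1 (F.filter (· ⊆ D'.1))) (Finset.mem_attach _ k)
      · rintro E hED (rfl | h)
        · exact ⟨⟨D₀, hD₀⟩, by simp⟩
        · obtain ⟨M, hM, hEM, hP, hmax⟩ := exists_maximal_superset D E
            (fun M => M.Nonempty ∧ M ∈ F) hED ⟨hF E h, h⟩
          refine ⟨⟨M, ?_⟩, hEM⟩
          rw [childSupports, if_neg hDF, Finset.mem_filter, Finset.mem_powerset]
          exact ⟨hM, hP.1, hP.2, fun D'' h h' h'' => hmax D'' (Finset.mem_powerset.1 h) ⟨h', h''⟩⟩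

lemma listPath_snoc {C V : Type u} (G : Pregraph C V) (c : C) (v : V) :
    ∀ (p : List (C × V)) (t : V), G.ListPath t p → G.Edge (Pregraph.pathEnd t p) c v →
      G.ListPath t (p ++ [(c, v)]) ∧ Pregraph.pathEnd t (p ++ [(c, v)]) = v
  | [], _, _, h => ⟨⟨h, trivial⟩, rfl⟩
  | e :: p, _, h1, h =>
    ⟨⟨h1.1, (listPath_snoc G c v p e.2 h1.2 h).1⟩, (listPath_snoc G c v p e.2 h1.2 h).2⟩

lemma pretree_levelled {C V : Type u} (G : Pregraph C V) (t₀ : V) (h : G.IsPretree t₀) :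
    ∃ p : V → List C, ∀ ⦃v c w⦄, G.Edge v c w → p w = p v ++ [c] := by
  choose q hq huniq using h
  refine ⟨fun v => (q v).map Prod.fst, fun v c w he => ?_⟩
  have := huniq w (q v ++ [(c, w)])
    (listPath_snoc G c w (q v) t₀ (hq v).1 (by rw [(hq v).2]; exact he))
  dsimp only
  rw [← this]
  simp

end Helpers2

/-- For every Muller objective `F` over a finite set of colours and
every cardinal `κ`, there is a well-monotone graph of width ≤ `mem(F)` which is
`(κ, Muller(F))`-universal for prefix-independent objectives. -/
theorem muller_universal_graph
    {C : Type u} [Fintype C] [DecidableEq C]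
    (F : Finset (Finset C)) (hF : ∀ A ∈ F, A.Nonempty) (κ : Cardinal.{u}) :
    ∃ (VU : Type u) (le : VU → VU → Prop) (U : Pregraph C VU),
      IsPartialOrder VU le ∧ WellFounded (strictOf le) ∧ U.MonotoneRel le ∧
      (∀ A : Set VU, IsAntichain le A →
        #(↥A) ≤ (memMuller Finset.univ F : Cardinal.{u})) ∧
      IsUniversalPI κ (MullerObj F) U := by
  obtain ⟨V, le, U, h⟩ := goodGraph_exists κ _ (Finset.univ : Finset C) rfl F hF
  refine ⟨V, le, U, h.po, h.wf, h.mono, h.width, fun v π γ _ hp => h.sat π γ hp, ?_⟩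
  intro VT T t₀ ht hκ hs
  exact h.univ VT T hκ (pretree_levelled T t₀ ht) (fun π γ hp => hs (π 0) π γ rfl hp)
    (fun v c w _ => Finset.mem_univ c)
end
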